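/- arXiv:1601.07205 — 2 statements merged into one kernel-verified Lean document; each statement's English description precedes it below -/
import Mathlib

section
/- Let n ≥ 2, let 𝓘 = {f₁,…,f_N} and 𝓙 = {g₁,…,g_N} be iterated function systems of contracting similarities of ℝⁿ satisfying the strong separation condition on bounded open sets Q and S respectively, and let φ : ℝⁿ \ (⋃ᵢ fᵢ(Q)) → ℝⁿ \ (⋃ᵢ gᵢ(S)) be a quasiconformal homeomorphism satisfying the compatibility condition: there exists ε > 0 such that φ(fᵢ(y)) = gᵢ(φ(y)) for every i = 1,…,N and every y ∈ ℝⁿ \ Q with dist(y, Q) ≤ ε. Then there exists a quasiconformal homeomorphism Φ : ℝⁿ → ℝⁿ such that Φ agrees with φ on ℝⁿ \ (⋃ᵢ fᵢ(Q)), Φ(fᵢ(x)) = gᵢ(Φ(x)) for every i and every x in the closure of Q, and Φ maps the invariant set K_𝓘 onto the invariant set K_𝓙. -/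
open Set Metric Filter MeasureTheory
open scoped ENNReal Topology NNReal

noncomputable section

/-- `L_Φ(x,r) = sup {|Φ(x) - Φ(y)| : y ∈ Ω, |x - y| ≤ r}`. -/
noncomputable def linDil {X : Type*} [MetricSpace X] (Ω : Set X) (Φ : X → X) (x : X) (r : ℝ) :
    ℝ≥0∞ :=
  ⨆ y ∈ {y | y ∈ Ω ∧ dist x y ≤ r}, edist (Φ x) (Φ y)

/-- `l_Φ(x,r) = inf {|Φ(x) - Φ(y)| : y ∈ Ω, |x - y| ≥ r}`. -/
noncomputable def linCon {X : Type*} [MetricSpace X] (Ω : Set X) (Φ : X → X) (x : X) (r : ℝ) :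
    ℝ≥0∞ :=
  ⨅ y ∈ {y | y ∈ Ω ∧ r ≤ dist x y}, edist (Φ x) (Φ y)

/-- `H_Φ(x) = limsup_{r → 0⁺} L_Φ(x,r) / l_Φ(x,r)`. -/
noncomputable def qcH {X : Type*} [MetricSpace X] (Ω : Set X) (Φ : X → X) (x : X) : ℝ≥0∞ :=
  Filter.limsup (fun r : ℝ => linDil Ω Φ x r / linCon Ω Φ x r) (𝓝[>] (0 : ℝ))

/-- A map `Φ`, viewed as a map of `Ω` into `X`, is quasiconformal if `H_Φ(x) ≤ H` for all
`x ∈ Ω`, for some finite `H ≥ 1`. -/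
def QuasiconformalOn {X : Type*} [MetricSpace X] (Ω : Set X) (Φ : X → X) : Prop :=
  ∃ H : ℝ, 1 ≤ H ∧ ∀ x ∈ Ω, qcH Ω Φ x ≤ ENNReal.ofReal H

/-- `Φ` restricts to a homeomorphism of `Ω` onto `Ω'`. -/
def IsHomeoOn {X : Type*} [TopologicalSpace X] (Φ : X → X) (Ω Ω' : Set X) : Prop :=
  ∃ e : Ω ≃ₜ Ω', ∀ x : Ω, (e x : X) = Φ (x : X)

/-- `f` is a similarity with ratio `r`. -/
def IsSimilarityWith {X : Type*} [MetricSpace X] (r : ℝ) (f : X → X) : Prop :=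
  0 < r ∧ ∀ x y, dist (f x) (f y) = r * dist x y

/-- The strong separation condition for the iterated function system `f` on the set `Q`:
each `f i` maps the closure of `Q` into `Q`, and the images of the closure of `Q` are
pairwise disjoint. -/
def StrongSeparation {X : Type*} [MetricSpace X] {ι : Type*} (f : ι → X → X) (Q : Set X) :
    Prop :=
  (∀ i, f i '' closure Q ⊆ Q) ∧
    ∀ i j, i ≠ j → Disjoint (f i '' closure Q) (f j '' closure Q)

/-- `f_σ = f_{σ₁} ∘ ⋯ ∘ f_{σ_k}` for a finite word `σ`. -/
def iterComp {X ι : Type*} (f : ι → X → X) : List ι → X → X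
  | [] => id
  | i :: w => f i ∘ iterComp f w

/-- The invariant set `K = ⋂_k ⋃_{|σ| = k} f_σ(closure Q)` of an iterated function system. -/
def invariantSet {X : Type*} [MetricSpace X] {ι : Type*} (f : ι → X → X) (Q : Set X) :
    Set X :=
  ⋂ k : ℕ, ⋃ w : Fin k → ι, iterComp f (List.ofFn w) '' closure Q

/-- The distance between two subsets of a metric space. -/
noncomputable def setDist {X : Type*} [MetricSpace X] (A B : Set X) : ℝ :=
  sInf ((fun p : X × X => dist p.1 p.2) '' A ×ˢ B)

end


lemma qp_det_poly {E : Type*} [NormedAddCommGroup E] [InnerProductSpace ℝ E]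
    [FiniteDimensional ℝ E] (A : E →L[ℝ] E) :
    ∃ p : Polynomial ℝ, p.natDegree ≤ Module.finrank ℝ E ∧
      ∀ t : ℝ, p.eval t = (ContinuousLinearMap.id ℝ E + t • A).det := by
  classical
  let b := Module.finBasis ℝ E
  let M := LinearMap.toMatrix b b (A : E →ₗ[ℝ] E)
  refine ⟨Matrix.det ((Polynomial.X : Polynomial ℝ) • M.map Polynomial.C + (1 : Matrix _ _ ℝ).map Polynomial.C), ?_, ?_⟩
  · refine (Polynomial.natDegree_det_X_add_C_le M 1).trans ?_
    simp
  · intro t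
    rw [ContinuousLinearMap.det, ← LinearMap.det_toMatrix b]
    rw [← Polynomial.coe_evalRingHom, RingHom.map_det]
    congr 1
    ext i j
    simp [M, LinearMap.toMatrix_apply, Matrix.one_apply, Finsupp.single_apply, eq_comm]
    by_cases h : i = j <;> simp [h, add_comm, mul_comm]

lemma qp_det_interp (E : Type*) [NormedAddCommGroup E] [InnerProductSpace ℝ E]
    [FiniteDimensional ℝ E] {δ : ℝ} (hδ : 0 < δ) :
    ∃ (m : ℕ) (lam t : ℕ → ℝ), (∀ j < m, 0 ≤ t j ∧ t j ≤ δ) ∧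
      ∑ j ∈ Finset.range m, lam j = 1 ∧
      ∀ A : E →L[ℝ] E, (ContinuousLinearMap.id ℝ E + A).det =
        ∑ j ∈ Finset.range m, lam j * (ContinuousLinearMap.id ℝ E + t j • A).det := by
  set d := Module.finrank ℝ E
  set t : ℕ → ℝ := fun j => δ * (j / (d + 1 : ℝ)) with ht
  have hinj : Set.InjOn t (Finset.range (d+1) : Set ℕ) := by
    intro a _ b _ hab
    have h1 : (d + 1 : ℝ) ≠ 0 := by positivity
    simp only [ht] at hab
    have := mul_left_cancel₀ hδ.ne' hab
    field_simp at this
    exact_mod_cast this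
  have key : ∀ p : Polynomial ℝ, p.natDegree ≤ d → p.eval 1 =
      ∑ j ∈ Finset.range (d+1), (Lagrange.basis (Finset.range (d+1)) t j).eval 1 * p.eval (t j) := by
    intro p hp
    conv_lhs => rw [Lagrange.eq_interpolate (f := p) hinj (by
      refine lt_of_le_of_lt Polynomial.degree_le_natDegree ?_
      simp; exact_mod_cast Nat.lt_succ_of_le hp)]
    rw [Lagrange.interpolate_apply, Polynomial.eval_finsetSum]
    refine Finset.sum_congr rfl fun j _ => ?_
    simp [mul_comm]
  refine ⟨d+1, fun j => (Lagrange.basis (Finset.range (d+1)) t j).eval 1, t, ?_, ?_, ?_⟩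
  · intro j hj
    refine ⟨by positivity, ?_⟩
    have : (j : ℝ) / (d+1 : ℝ) ≤ 1 := by
      rw [div_le_one (by positivity)]; exact_mod_cast hj.le
    simp only [ht]; nlinarith
  · have := key 1 (by simp)
    simpa using this.symm
  · intro A
    obtain ⟨p, hp, hp'⟩ := qp_det_poly A
    have := key p hp
    simp only [hp', one_smul] at this
    exact this


lemma qp_lip_zero_ext {E : Type*} [NormedAddCommGroup E] [InnerProductSpace ℝ E]
    {v : E → E} {R L : ℝ} (hL : 0 ≤ L)
    (hv : ∀ x y, ‖x‖ ≤ R → ‖y‖ ≤ R → ‖v x - v y‖ ≤ L * ‖x - y‖)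
    (hs : ∀ x, ‖x‖ = R → v x = 0) (w : E → E)
    (hw : ∀ x, ‖x‖ ≤ R → w x = v x) (hw' : ∀ x, R < ‖x‖ → w x = 0) (x y : E) :
    ‖w x - w y‖ ≤ L * ‖x - y‖ := by
  have key : ∀ x y, ‖x‖ ≤ R → R < ‖y‖ → ‖w x - w y‖ ≤ L * ‖x - y‖ := by
    intro x y hx hy
    have hc : ContinuousOn (fun s : ℝ => ‖x + s • (y - x)‖) (Icc 0 1) := by fun_prop
    have := intermediate_value_Icc (zero_le_one' ℝ) hc
    obtain ⟨s, hs01, hsR⟩ := this (show R ∈ _ by simp; exact ⟨hx, hy.le⟩)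
    simp only at hsR
    rw [hw x hx, hw' y hy]
    have h1 := hv x (x + s • (y - x)) hx hsR.le
    rw [hs _ hsR] at h1
    refine h1.trans ?_
    gcongr
    rw [show x - (x + s • (y - x)) = s • (x - y) by rw [← neg_sub y x, smul_neg]; abel, norm_smul,
      Real.norm_of_nonneg hs01.1]
    have := norm_nonneg (x - y)
    nlinarith [hs01.2]
  rcases le_or_gt ‖x‖ R with hx | hx <;> rcases le_or_gt ‖y‖ R with hy | hy
  · rw [hw x hx, hw y hy]; exact hv x y hx hy
  · exact key x y hx hy
  · rw [norm_sub_rev, norm_sub_rev x]; exact key y x hy hx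
  · rw [hw' x hx, hw' y hy]; simp; positivity

lemma qp_det_pos {E : Type*} [NormedAddCommGroup E] [InnerProductSpace ℝ E]
    [FiniteDimensional ℝ E] (A : E →L[ℝ] E) (hA : ‖A‖ < 1) :
    0 < (ContinuousLinearMap.id ℝ E + A).det := by
  have hne : ∀ s ∈ Icc (0:ℝ) 1, (ContinuousLinearMap.id ℝ E + s • A).det ≠ 0 := by
    intro s hs h0
    have hker : LinearMap.ker ((ContinuousLinearMap.id ℝ E + s • A : E →L[ℝ] E) : E →ₗ[ℝ] E) ≠ ⊥ := by
      have := LinearMap.bot_lt_ker_of_det_eq_zero h0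
      exact this.ne'
    obtain ⟨x, hx, hx0⟩ := (Submodule.ne_bot_iff _).1 hker
    have h1 : x = -(s • A x) := by
      have : x + s • A x = 0 := by simpa using hx
      exact eq_neg_of_add_eq_zero_left this
    have h2 : ‖x‖ ≤ ‖A‖ * ‖x‖ := by
      calc ‖x‖ = ‖s • A x‖ := by conv_lhs => rw [h1, norm_neg]
        _ = s * ‖A x‖ := by rw [norm_smul, Real.norm_of_nonneg hs.1]
        _ ≤ 1 * ‖A x‖ := by gcongr; exact hs.2
        _ ≤ _ := by rw [one_mul]; exact A.le_opNorm x
    have : 0 < ‖x‖ := norm_pos_iff.2 hx0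
    nlinarith
  have hc : ContinuousOn (fun s : ℝ => (ContinuousLinearMap.id ℝ E + s • A).det) (Icc 0 1) := by
    obtain ⟨p, -, hp⟩ := qp_det_poly A
    simp_rw [← hp]
    exact p.continuous.continuousOn
  by_contra hneg
  push Not at hneg
  have := intermediate_value_Icc' (zero_le_one' ℝ) hc
  obtain ⟨s, hs, hs0⟩ := this (show (0:ℝ) ∈ _ by
    simp only [one_smul, zero_smul, add_zero]
    refine ⟨hneg, ?_⟩
    rw [ContinuousLinearMap.det]; simp)
  exact hne s hs hs0

lemma qp_no_retract {E : Type*} [NormedAddCommGroup E] [InnerProductSpace ℝ E]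
    [FiniteDimensional ℝ E] [MeasurableSpace E] [BorelSpace E] (g : E → E) {R : ℝ} (hR : 0 < R)
    (hg : ContDiff ℝ 1 g) (hn : ∀ x, ‖g x‖ = R) (hs : ∀ x, ‖x‖ = R → g x = x) : False := by
  set v : E → E := fun x => g x - x with hvdef
  have hv : ContDiff ℝ 1 v := hg.sub contDiff_id
  have hvd : Differentiable ℝ v := hv.differentiable (by norm_num)
  have hgd : Differentiable ℝ g := hg.differentiable (by norm_num)
  have hvc : Continuous (fderiv ℝ v) := hv.continuous_fderiv (by norm_num)
  have hfg : ∀ x, fderiv ℝ g x = ContinuousLinearMap.id ℝ E + fderiv ℝ v x := by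
    intro x
    have h : fderiv ℝ v x = fderiv ℝ g x - ContinuousLinearMap.id ℝ E :=
      ((hgd x).hasFDerivAt.sub (hasFDerivAt_id x)).fderiv
    rw [h]; abel
  obtain ⟨L, hLpos, hL⟩ : ∃ L : ℝ, 0 < L ∧ ∀ x ∈ closedBall (0:E) R, ‖fderiv ℝ v x‖ ≤ L := by
    obtain ⟨L, hL⟩ := (isCompact_closedBall (0:E) R).exists_bound_of_continuousOn hvc.continuousOn
    exact ⟨max L 1, by positivity, fun x hx => (hL x hx).trans (le_max_left _ _)⟩
  have hlip : ∀ x y, ‖x‖ ≤ R → ‖y‖ ≤ R → ‖v x - v y‖ ≤ L * ‖x - y‖ := by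
    intro x y hx hy
    exact (convex_closedBall (0:E) R).norm_image_sub_le_of_norm_fderiv_le
      (fun z _ => hvd z) hL (by simpa using hy) (by simpa using hx)
  set w : E → E := fun x => if ‖x‖ ≤ R then v x else 0 with hwdef
  have hw1 : ∀ x, ‖x‖ ≤ R → w x = v x := fun x hx => by simp [hwdef, hx]
  have hw2 : ∀ x, R < ‖x‖ → w x = 0 := fun x hx => by simp [hwdef, hx]
  have hwl := qp_lip_zero_ext hLpos.le hlip (fun x hx => by simp [hvdef, hs x hx]) w hw1 hw2
  have hδ : 0 < 1 / (2 * L) := by positivity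
  have main : ∀ t : ℝ, 0 ≤ t → t ≤ 1 / (2 * L) →
      ∫ x in closedBall (0:E) R, (ContinuousLinearMap.id ℝ E + t • fderiv ℝ v x).det
        = volume.real (closedBall (0:E) R) := by
    intro t ht0 ht
    have htL : t * L ≤ 1 / 2 := by
      calc t * L ≤ 1 / (2 * L) * L := by gcongr
        _ = 1 / 2 := by field_simp
    have hcontr : ∀ x y, ‖t • w x - t • w y‖ ≤ 1 / 2 * ‖x - y‖ := by
      intro x y
      rw [← smul_sub, norm_smul, Real.norm_of_nonneg ht0]
      calc t * ‖w x - w y‖ ≤ t * (L * ‖x - y‖) := by gcongr; exact hwl x y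
        _ = t * L * ‖x - y‖ := by ring
        _ ≤ _ := by gcongr
    set F : E → E := fun x => x + t • w x with hF
    have hinj : Function.Injective F := by
      intro x y hxy
      have h1 : x - y = -(t • w x - t • w y) := by
        simp only [hF] at hxy
        have : x + t • w x - (y + t • w y) = 0 := sub_eq_zero.2 hxy
        rw [eq_neg_iff_add_eq_zero, ← this]; abel
      have h2 := hcontr x y
      rw [← norm_neg (t • w x - t • w y), ← h1] at h2
      have h3 := norm_nonneg (x - y)
      have : ‖x - y‖ = 0 := by linarith
      exact sub_eq_zero.1 (norm_eq_zero.1 this)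
    have hsurj : Function.Surjective F := by
      intro y
      have hc : ContractingWith (1/2 : ℝ≥0) (fun x => y - t • w x) := by
        refine ⟨by norm_num, LipschitzWith.of_dist_le_mul fun a b => ?_⟩
        rw [dist_eq_norm, dist_eq_norm, sub_sub_sub_cancel_left, norm_sub_rev]
        simpa using hcontr a b
      refine ⟨hc.fixedPoint, ?_⟩
      have := hc.fixedPoint_isFixedPt
      simp only [Function.IsFixedPt] at this
      simp only [hF]
      nth_rewrite 1 [← this]
      simp
    have himg : (fun x => x + t • v x) '' closedBall (0:E) R = closedBall 0 R := by
      have e1 : (fun x => x + t • v x) '' closedBall (0:E) R = F '' closedBall (0:E) R := by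
        refine image_congr fun x hx => ?_
        simp only [hF]; rw [hw1 x (by simpa using hx)]
      have e2 : F '' (closedBall (0:E) R)ᶜ = (closedBall (0:E) R)ᶜ := by
        rw [image_congr (g := id), image_id]
        intro x hx
        simp only [hF, id]; rw [hw2 x (by simpa using hx)]; simp
      rw [e1, ← compl_inj_iff, ← image_compl_eq ⟨hinj, hsurj⟩, e2]
    have hinjOn : InjOn (fun x => x + t • v x) (closedBall (0:E) R) := by
      intro x hx y hy hxy
      apply hinj
      simp only [hF]; rw [hw1 x (by simpa using hx), hw1 y (by simpa using hy)]; exact hxy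
    have cov := integral_image_eq_integral_abs_det_fderiv_smul (volume : Measure E)
      (s := closedBall (0:E) R) (f := fun x => x + t • v x)
      (f' := fun x => ContinuousLinearMap.id ℝ E + t • fderiv ℝ v x)
      measurableSet_closedBall
      (fun x _ => ((hasFDerivAt_id x).add ((hvd x).hasFDerivAt.const_smul t)).hasFDerivWithinAt)
      hinjOn (fun _ => (1:ℝ))
    rw [himg] at cov
    simp only [integral_const, smul_eq_mul, mul_one, measureReal_restrict_apply_univ] at cov
    rw [cov]
    refine setIntegral_congr_fun measurableSet_closedBall fun x hx => ?_
    refine (abs_of_pos ?_).symm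
    apply qp_det_pos
    rw [norm_smul, Real.norm_of_nonneg ht0]
    have := hL x hx
    nlinarith [norm_nonneg (fderiv ℝ v x)]
  obtain ⟨m, lam, t, ht, hlam, hdet⟩ := qp_det_interp E hδ
  have hdet0 : ∀ x, (ContinuousLinearMap.id ℝ E + fderiv ℝ v x).det = 0 := by
    intro x
    rw [← hfg]
    by_contra hne
    have hgx : g x ≠ 0 := by
      intro h; have := hn x; rw [h, norm_zero] at this; exact hR.ne this
    have hsurj : Function.Surjective (fderiv ℝ g x) := by
      rw [← ContinuousLinearMap.coe_coe]
      rw [← LinearMap.range_eq_top]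
      rw [← LinearMap.ker_eq_bot_iff_range_eq_top]
      by_contra hlt
      exact hne (LinearMap.det_eq_zero_iff_ker_ne_bot.2 hlt)
    obtain ⟨u, hu⟩ := hsurj (g x)
    have hconst : (fun y => inner ℝ (g y) (g y)) = fun _ : E => R ^ 2 := by
      funext y; rw [real_inner_self_eq_norm_sq, hn]
    have h1 := ((hgd x).hasFDerivAt.inner ℝ (hgd x).hasFDerivAt)
    rw [hconst] at h1
    have h2 := h1.unique (hasFDerivAt_const _ _)
    have h3 := congrArg (fun T => T u) h2
    simp [hu] at h3
    exact hgx h3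
  have hcd : ∀ s : ℝ, Continuous fun x => (ContinuousLinearMap.id ℝ E + s • fderiv ℝ v x).det := by
    intro s
    exact ContinuousLinearMap.continuous_det.comp (continuous_const.add (hvc.const_smul s))
  have h0 : ∫ x in closedBall (0:E) R, (ContinuousLinearMap.id ℝ E + fderiv ℝ v x).det
      = volume.real (closedBall (0:E) R) := by
    rw [show (fun x => (ContinuousLinearMap.id ℝ E + fderiv ℝ v x).det) = fun x =>
      ∑ j ∈ Finset.range m, lam j * (ContinuousLinearMap.id ℝ E + t j • fderiv ℝ v x).det from
      funext fun x => hdet _]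
    rw [integral_finsetSum]
    · rw [Finset.sum_congr rfl (g := fun j => lam j * volume.real (closedBall (0:E) R)),
        ← Finset.sum_mul, hlam, one_mul]
      intro j hj
      rw [integral_const_mul, main _ (ht j (Finset.mem_range.1 hj)).1 (ht j (Finset.mem_range.1 hj)).2]
    · intro j _
      exact ((hcd (t j)).continuousOn.integrableOn_compact (isCompact_closedBall _ _)).const_mul _
  simp_rw [hdet0] at h0
  have hpos : 0 < volume.real (closedBall (0:E) R) :=
    ENNReal.toReal_pos (measure_closedBall_pos volume _ hR).ne' measure_closedBall_lt_top.ne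
  simp at h0
  linarith


/-- The Brouwer fixed point theorem. -/
lemma qp_brouwer {E : Type*} [NormedAddCommGroup E] [InnerProductSpace ℝ E]
    [FiniteDimensional ℝ E] [MeasurableSpace E] [BorelSpace E] (h : E → E)
    (hc : Continuous h) (hb : ∀ x, ‖h x‖ ≤ 1) : ∃ x, ‖x‖ ≤ 1 ∧ h x = x := by
  by_contra hno
  push Not at hno
  set χ : E → ℝ := fun x => max 0 (min 1 (2 - ‖x‖)) with hχ
  have hχc : Continuous χ := by fun_prop
  have hχ0 : ∀ x, 0 ≤ χ x := fun x => le_max_left _ _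
  have hχ1 : ∀ x, χ x ≤ 1 := fun x => max_le zero_le_one (min_le_left _ _)
  set H0 : E → E := fun x => x - χ x • h x with hH0
  have hH0c : Continuous H0 := by fun_prop
  have hH0ne : ∀ x, H0 x ≠ 0 := by
    intro x h0
    rcases le_or_gt ‖x‖ 1 with hx | hx
    · have : χ x = 1 := by
        simp only [hχ]
        rw [min_eq_left (by linarith), max_eq_right zero_le_one]
      simp only [hH0, this, one_smul] at h0
      exact hno x hx (sub_eq_zero.1 h0).symm
    · simp only [hH0] at h0
      have h1 : ‖x‖ = ‖χ x • h x‖ := by rw [← sub_eq_zero.1 h0]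
      rw [norm_smul, Real.norm_of_nonneg (hχ0 x)] at h1
      have := hχ0 x; have := hχ1 x; have := hb x; have := norm_nonneg (h x)
      nlinarith
  have hH0id : ∀ x, 2 < ‖x‖ → H0 x = x := by
    intro x hx
    have : χ x = 0 := by
      simp only [hχ]
      exact max_eq_left ((min_le_right _ _).trans (by linarith))
    simp [hH0, this]
  have hS : IsClosed {x : E | 3 ≤ ‖x‖} := isClosed_le continuous_const continuous_norm
  have hUo : IsOpen {x : E | 2 < ‖x‖} := isOpen_lt continuous_const continuous_norm
  obtain ⟨H, hH, happ, heq, -⟩ := hH0c.exists_contDiff_approx_and_eqOn 1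
    (ε := fun x => ‖H0 x‖) hH0c.norm (fun x => norm_pos_iff.2 (hH0ne x)) hS
    (hUo.mem_nhdsSet.2 fun x (hx : 3 ≤ ‖x‖) => show 2 < ‖x‖ by linarith)
    (contDiffOn_id.congr fun x hx => hH0id x hx)
  have hHne : ∀ x, H x ≠ 0 := by
    intro x h0
    have := happ x
    rw [h0, dist_zero_left] at this
    exact lt_irrefl _ this
  have hHn : ∀ x, ‖H x‖ ≠ 0 := fun x => norm_ne_zero_iff.2 (hHne x)
  refine qp_no_retract (fun x => (3 / ‖H x‖) • H x) (R := 3) (by norm_num) ?_ ?_ ?_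
  · exact (contDiff_const.div (hH.norm ℝ hHne) hHn).smul hH
  · intro x
    rw [norm_smul, Real.norm_of_nonneg (by positivity)]
    have := hHn x
    field_simp
  · intro x hx
    have h1 : H x = x := by
      rw [heq (show 3 ≤ ‖x‖ by linarith), hH0id x (by linarith)]
    simp only [h1, hx]
    norm_num

/-- Invariance of domain. -/
lemma qp_inv_domain {E : Type*} [NormedAddCommGroup E] [InnerProductSpace ℝ E]
    [FiniteDimensional ℝ E] [MeasurableSpace E] [BorelSpace E] [Nontrivial E]
    (f : E → E) (x0 : E) {r : ℝ} (hr : 0 < r) (hc : ContinuousOn f (closedBall x0 r))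
    (hi : InjOn f (closedBall x0 r)) : f '' closedBall x0 r ∈ 𝓝 (f x0) := by
  set B := closedBall x0 r with hB
  have hBc : IsCompact B := isCompact_closedBall _ _
  have : CompactSpace B := isCompact_iff_compactSpace.1 hBc
  have he : Topology.IsClosedEmbedding (fun x : B => f x) :=
    (continuousOn_iff_continuous_domRestrict.1 hc).isClosedEmbedding
      (fun x y hxy => Subtype.ext (hi x.2 y.2 hxy))
  obtain ⟨G, hG⟩ := ContinuousMap.exists_extension he
    (⟨fun x : B => r⁻¹ • ((x : E) - x0), by fun_prop⟩ : C(B, E))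
  have hGf : ∀ x ∈ B, G (f x) = r⁻¹ • (x - x0) := by
    intro x hx
    exact congrArg (fun T => T ⟨x, hx⟩) hG
  have hx0 : x0 ∈ B := mem_closedBall_self hr.le
  have hG0 : G (f x0) = 0 := by rw [hGf x0 hx0]; simp
  have hGne : ∀ y ∈ f '' B, y ≠ f x0 → G y ≠ 0 := by
    rintro _ ⟨x, hx, rfl⟩ hne h0
    rw [hGf x hx] at h0
    have : x - x0 = 0 := by simpa [hr.ne'] using h0
    exact hne (by rw [sub_eq_zero.1 this])
  by_contra hnot
  obtain ⟨ε, hε, hGε⟩ : ∃ ε > 0, ∀ y, dist y (f x0) ≤ 2 * ε → ‖G y‖ ≤ 1 / 10 := by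
    have h1 := Metric.continuous_iff.1 G.continuous (f x0) (1/10) (by norm_num)
    obtain ⟨d, hd, h1⟩ := h1
    refine ⟨d / 4, by positivity, fun y hy => ?_⟩
    have := h1 y (by linarith)
    rw [hG0, dist_zero_right] at this
    exact this.le
  obtain ⟨c, hcε, hcB⟩ : ∃ c, dist c (f x0) < ε ∧ c ∉ f '' B := by
    by_contra hall
    push Not at hall
    exact hnot (Filter.mem_of_superset (ball_mem_nhds _ hε) fun c hc => hall c hc)
  have hfB : IsCompact (f '' B) := hBc.image_of_continuousOn hc
  have hSig : IsCompact (f '' B ∩ {y | ε ≤ ‖y - c‖}) :=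
    hfB.inter_right (isClosed_le continuous_const (by fun_prop))
  obtain ⟨δ1, hδ1, hδ1'⟩ := hSig.exists_forall_le' (f := fun y => ‖G y‖) (a := 0)
    (by fun_prop) (by
      rintro y ⟨hy, hy'⟩
      refine norm_pos_iff.2 (hGne y hy ?_)
      rintro rfl
      have hy' : ε ≤ ‖f x0 - c‖ := hy'
      rw [← dist_eq_norm, dist_comm] at hy'
      linarith)
  set δ := min (1/10) (δ1 / 2) with hδ
  have hδpos : 0 < δ := by positivity
  have hδa : δ ≤ 1/10 := min_le_left _ _
  have hδb : δ ≤ δ1 / 2 := min_le_right _ _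
  obtain ⟨P, hP, hPG, -⟩ := G.continuous.exists_contDiff_approx 1 (ε := fun _ => δ)
    continuous_const (fun _ => hδpos)
  have hnull : volume (P '' sphere c ε) = 0 :=
    addHaar_image_eq_zero_of_differentiableOn_of_addHaar_eq_zero volume
      (hP.differentiable (by norm_num)).differentiableOn (Measure.addHaar_sphere _ _ _)
  obtain ⟨a, ha, haP⟩ : ∃ a : E, ‖a‖ < δ ∧ a ∉ P '' sphere c ε := by
    by_contra hall
    push Not at hall
    have hsub : ball (0:E) δ ⊆ P '' sphere c ε := fun a ha => hall a (by simpa using ha)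
    have := measure_mono_null hsub hnull
    exact (measure_ball_pos volume (0:E) hδpos).ne' this
  set P' : E → E := fun y => P y - a with hP'
  have hP'c : Continuous P' := hP.continuous.sub continuous_const
  have hP'G : ∀ y, ‖G y - P' y‖ < 2 * δ := by
    intro y
    have h1 := hPG y
    rw [dist_comm, dist_eq_norm] at h1
    calc ‖G y - P' y‖ = ‖(G y - P y) + a‖ := by simp only [hP']; congr 1; abel
      _ ≤ _ := norm_add_le _ _
      _ < _ := by linarith
  set ρ : E → E := fun y => c + max (ε / ‖y - c‖) 1 • (y - c) with hρ
  have hyc : ∀ y ∈ f '' B, ‖y - c‖ ≠ 0 := by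
    intro y hy h0
    exact hcB (by rwa [← sub_eq_zero.1 (norm_eq_zero.1 h0)])
  have hρc : ContinuousOn ρ (f '' B) := by
    refine continuousOn_const.add (ContinuousOn.smul (ContinuousOn.sup (ContinuousOn.div continuousOn_const (by fun_prop) hyc) continuousOn_const) (by fun_prop))
  have hρ1 : ∀ y ∈ f '' B, ε ≤ ‖y - c‖ → ρ y = y := by
    intro y hy hle
    have : ε / ‖y - c‖ ≤ 1 := by
      rw [div_le_one (by linarith)]; exact hle
    simp [hρ, max_eq_right this]
  have hρ2 : ∀ y ∈ f '' B, ‖y - c‖ < ε → ‖ρ y - c‖ = ε := by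
    intro y hy hlt
    have hpos : 0 < ‖y - c‖ := lt_of_le_of_ne (norm_nonneg _) (hyc y hy).symm
    have : 1 ≤ ε / ‖y - c‖ := by
      rw [le_div_iff₀ hpos]; linarith
    simp only [hρ, max_eq_left this, add_sub_cancel_left, norm_smul]
    rw [Real.norm_of_nonneg (by positivity)]
    field_simp
  have hGt_ne : ∀ y ∈ f '' B, P' (ρ y) ≠ 0 := by
    intro y hy h0
    rcases le_or_gt ε ‖y - c‖ with hle | hlt
    · rw [hρ1 y hy hle] at h0
      have h1 := hP'G y
      rw [h0, sub_zero] at h1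
      have h2 := hδ1' y ⟨hy, hle⟩
      linarith
    · apply haP
      refine ⟨ρ y, ?_, ?_⟩
      · rw [mem_sphere, dist_eq_norm]; exact hρ2 y hy hlt
      · exact sub_eq_zero.1 h0
  have hGt : ∀ y ∈ f '' B, ‖G y - P' (ρ y)‖ ≤ 1 := by
    intro y hy
    rcases le_or_gt ε ‖y - c‖ with hle | hlt
    · rw [hρ1 y hy hle]
      have := hP'G y
      linarith
    · have h1 := hρ2 y hy hlt
      have h2 : ‖G (ρ y)‖ ≤ 1/10 := by
        apply hGε
        have := dist_triangle (ρ y) c (f x0)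
        rw [dist_eq_norm (ρ y) c, h1] at this
        linarith
      have h3 : ‖G y‖ ≤ 1/10 := by
        apply hGε
        have := dist_triangle y c (f x0)
        rw [dist_eq_norm y c] at this
        linarith
      have h4 := hP'G (ρ y)
      calc ‖G y - P' (ρ y)‖ = ‖G y - G (ρ y) + (G (ρ y) - P' (ρ y))‖ := by congr 1; abel
        _ ≤ ‖G y - G (ρ y)‖ + ‖G (ρ y) - P' (ρ y)‖ := norm_add_le _ _
        _ ≤ ‖G y‖ + ‖G (ρ y)‖ + ‖G (ρ y) - P' (ρ y)‖ := by gcongr; exact norm_sub_le _ _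
        _ ≤ 1 := by linarith
  set π : E → E := fun z => (max 1 ‖z‖)⁻¹ • z with hπ
  have hmpos : ∀ z : E, 0 < max 1 ‖z‖ := fun z => lt_of_lt_of_le one_pos (le_max_left _ _)
  have hπc : Continuous π := by
    refine Continuous.smul (Continuous.inv₀ (by fun_prop) fun z => (hmpos z).ne') continuous_id
  have hπn : ∀ z, ‖π z‖ ≤ 1 := by
    intro z
    simp only [hπ, norm_smul, norm_inv]
    rw [Real.norm_of_nonneg (hmpos z).le, inv_mul_le_iff₀ (hmpos z), mul_one]
    exact le_max_right _ _
  have hπB : ∀ z, x0 + r • π z ∈ B := by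
    intro z
    rw [hB, mem_closedBall, dist_eq_norm, add_sub_cancel_left, norm_smul, Real.norm_of_nonneg hr.le]
    have := hπn z
    nlinarith
  have hfc : Continuous fun z => f (x0 + r • π z) :=
    hc.comp_continuous (by fun_prop) hπB
  have hcomp : Continuous fun z => P' (ρ (f (x0 + r • π z))) :=
    hP'c.comp (hρc.comp_continuous hfc fun z => mem_image_of_mem _ (hπB z))
  obtain ⟨z, hz1, hz⟩ := qp_brouwer (fun z => π z - P' (ρ (f (x0 + r • π z))))
    (hπc.sub hcomp) (by
      intro z
      have h1 := hGt _ (mem_image_of_mem f (hπB z))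
      rw [hGf _ (hπB z), add_sub_cancel_left, smul_smul, inv_mul_cancel₀ hr.ne', one_smul] at h1
      exact h1)
  have hπz : π z = z := by simp [hπ, max_eq_left hz1]
  simp only [hπz] at hz
  have h0 : P' (ρ (f (x0 + r • z))) = 0 := by
    have := sub_eq_self.1 hz
    exact this
  refine hGt_ne _ (mem_image_of_mem f ?_) h0
  have := hπB z
  rwa [hπz] at this


lemma qp_sim_homeo {E : Type*} [NormedAddCommGroup E] [InnerProductSpace ℝ E]
    [FiniteDimensional ℝ E] {f : E → E} {r : ℝ} (hr : 0 < r)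
    (hf : ∀ x y, dist (f x) (f y) = r * dist x y) : ∃ F : E ≃ₜ E, ⇑F = f := by
  have hiso : Isometry fun x => r⁻¹ • f x := by
    refine Isometry.of_dist_eq fun x y => ?_
    rw [dist_smul₀, hf, Real.norm_of_nonneg (by positivity), inv_mul_cancel_left₀ hr.ne']
  let A : E →ᵃⁱ[ℝ] E := hiso.affineIsometryOfStrictConvexSpace
  have hA : ∀ x, A x = r⁻¹ • f x := fun x => rfl
  have hlin : Function.Surjective A.linearIsometry :=
    (A.linearIsometry.toLinearMap.injective_iff_surjective).1 A.linearIsometry.injective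
  have hsurj : Function.Surjective f := by
    intro y
    obtain ⟨v, hv⟩ := hlin (r⁻¹ • y - A 0)
    refine ⟨v, ?_⟩
    have h1 : A v = r⁻¹ • y := by
      have := A.map_vadd 0 v
      simp only [vadd_eq_add, add_zero] at this
      rw [this, hv]; abel
    rw [hA] at h1
    exact smul_right_injective E (inv_ne_zero hr.ne') h1
  have hinj : Function.Injective f := by
    intro x y hxy
    have := hf x y
    rw [hxy, dist_self] at this
    have : dist x y = 0 := by
      rcases mul_eq_zero.1 this.symm with h | h
      · exact absurd h hr.ne'
      · exact h
    exact dist_eq_zero.1 this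
  let e := Equiv.ofBijective f ⟨hinj, hsurj⟩
  refine ⟨⟨e, ?_, ?_⟩, rfl⟩
  · exact (LipschitzWith.of_dist_le_mul (K := ⟨r, hr.le⟩) fun x y => (hf x y).le).continuous
  · refine (LipschitzWith.of_dist_le_mul (K := ⟨r⁻¹, by positivity⟩) fun x y => ?_).continuous
    have := hf (e.symm x) (e.symm y)
    have h1 : ∀ z, f (e.symm z) = z := fun z => e.apply_symm_apply z
    rw [h1, h1] at this
    change dist (e.symm x) (e.symm y) ≤ r⁻¹ * dist x y
    rw [this, inv_mul_cancel_left₀ hr.ne']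

lemma qp_vanish {E ι : Type*} [TopologicalSpace E] (f : ι → E → E) (Q : Set E) (u : E → ℝ)
    {M ρ : ℝ} (hρ0 : 0 ≤ ρ) (hρ1 : ρ < 1)
    (hb : ∀ x ∈ closure Q, u x ≤ M) (h0 : ∀ x ∈ closure Q, x ∉ ⋃ i, f i '' Q → u x ≤ 0)
    (hst : ∀ i, ∀ x ∈ Q, u (f i x) ≤ ρ * u x) : ∀ x ∈ closure Q, u x ≤ 0 := by
  have key : ∀ k : ℕ, ∀ x ∈ closure Q, u x ≤ ρ ^ k * max M 0 := by
    intro k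
    induction k with
    | zero => intro x hx; simpa using Or.inl (hb x hx)
    | succ k ih =>
      intro x hx
      by_cases hxU : x ∈ ⋃ i, f i '' Q
      · obtain ⟨i, z, hz, rfl⟩ := mem_iUnion.1 hxU
        calc u (f i z) ≤ ρ * u z := hst i z hz
          _ ≤ ρ * (ρ ^ k * max M 0) := by gcongr; exact ih z (subset_closure hz)
          _ = _ := by ring
      · exact (h0 x hx hxU).trans (by positivity)
  intro x hx
  have ht : Tendsto (fun k : ℕ => ρ ^ k * max M 0) atTop (𝓝 (0 * max M 0)) :=
    (tendsto_pow_atTop_nhds_zero_of_lt_one hρ0 hρ1).mul_const _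
  rw [zero_mul] at ht
  exact ge_of_tendsto' ht fun k => key k x hx

lemma qp_extend {E ι : Type*} [NormedAddCommGroup E] [InnerProductSpace ℝ E]
    [FiniteDimensional ℝ E] [Finite ι] (f : ι → E ≃ₜ E) (g : ι → E → E) (Q : Set E)
    (hQo : IsOpen Q) (hQb : Bornology.IsBounded Q)
    (hsub : ∀ i, f i '' closure Q ⊆ Q)
    (hdisj : ∀ i j, i ≠ j → Disjoint (f i '' closure Q) (f j '' closure Q))
    {ρ : ℝ} (hρ0 : 0 ≤ ρ) (hρ1 : ρ < 1) (hg : ∀ i x y, dist (g i x) (g i y) ≤ ρ * dist x y)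
    (φ : E → E) (hφ : ContinuousOn φ (⋃ i, f i '' Q)ᶜ)
    (hcompat : ∀ i, ∀ y ∈ frontier Q, φ (f i y) = g i (φ y)) :
    ∃ Φ : E → E, Continuous Φ ∧ (∀ x ∈ (⋃ i, f i '' Q)ᶜ, Φ x = φ x) ∧
      ∀ i, ∀ x ∈ closure Q, Φ (f i x) = g i (Φ x) := by
  classical
  set U := ⋃ i, f i '' Q with hU
  have hUo : IsOpen U := isOpen_iUnion fun i => (f i).isOpenMap _ hQo
  have hUc : IsClosed Uᶜ := hUo.isClosed_compl
  have hQc : IsCompact (closure Q) := hQb.isCompact_closure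
  have hUQ : U ⊆ Q := iUnion_subset fun i => (image_mono subset_closure).trans (hsub i)
  have hgc : ∀ i, Continuous (g i) := fun i =>
    (LipschitzWith.of_dist_le_mul (K := ⟨ρ, hρ0⟩) fun x y => hg i x y).continuous
  have hfr : ∀ z ∈ closure Q, z ∉ Q → z ∈ frontier Q := fun z h1 h2 => by
    rw [hQo.frontier_eq]; exact ⟨h1, h2⟩
  have hfrU : ∀ i, ∀ z ∈ closure Q, z ∉ Q → f i z ∈ Uᶜ := by
    intro i z hz hzQ hmem
    obtain ⟨j, w, hw, hwz⟩ := mem_iUnion.1 hmem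
    by_cases hij : i = j
    · subst hij
      exact hzQ ((f i).injective hwz ▸ hw)
    · exact Set.disjoint_left.1 (hdisj i j hij) (mem_image_of_mem _ hz)
        ⟨w, subset_closure hw, hwz⟩
  let T : (E → E) → E → E := fun Ψ x =>
    if h : ∃ i, (f i).symm x ∈ Q then g h.choose (Ψ ((f h.choose).symm x)) else φ x
  have hTΩ : ∀ Ψ, ∀ x ∈ Uᶜ, T Ψ x = φ x := by
    intro Ψ x hx
    have : ¬ ∃ i, (f i).symm x ∈ Q := by
      rintro ⟨i, hi⟩
      exact hx (mem_iUnion.2 ⟨i, _, hi, by simp⟩)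
    simp only [T, dif_neg this]
  have hTQ : ∀ Ψ i, ∀ z ∈ Q, T Ψ (f i z) = g i (Ψ z) := by
    intro Ψ i z hz
    have h : ∃ j, (f j).symm (f i z) ∈ Q := ⟨i, by simpa using hz⟩
    have hj : h.choose = i := by
      by_contra hne
      refine Set.disjoint_left.1 (hdisj _ _ hne)
        ⟨_, subset_closure h.choose_spec, (f _).apply_symm_apply _⟩
        (mem_image_of_mem _ (subset_closure hz))
    simp only [T, dif_pos h]
    rw [hj]; simp
  have hTcl : ∀ Ψ : E → E, (∀ x ∈ Uᶜ, Ψ x = φ x) →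
      ∀ i, ∀ z ∈ closure Q, T Ψ (f i z) = g i (Ψ z) := by
    intro Ψ hΨ i z hz
    by_cases hzQ : z ∈ Q
    · exact hTQ Ψ i z hzQ
    · rw [hTΩ Ψ _ (hfrU i z hz hzQ), hcompat i z (hfr z hz hzQ), hΨ z fun h => hzQ (hUQ h)]
  have hTc : ∀ Ψ : E → E, Continuous Ψ → (∀ x ∈ Uᶜ, Ψ x = φ x) → Continuous (T Ψ) := by
    intro Ψ hΨc hΨ
    have hcov : ⋃ o : Option ι, (o.elim Uᶜ fun i => f i '' closure Q) = univ := by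
      refine eq_univ_of_forall fun x => ?_
      by_cases hx : x ∈ U
      · obtain ⟨i, z, hz, rfl⟩ := mem_iUnion.1 hx
        exact mem_iUnion.2 ⟨some i, mem_image_of_mem _ (subset_closure hz)⟩
      · exact mem_iUnion.2 ⟨none, hx⟩
    refine (locallyFinite_of_finite _).continuous hcov ?_ ?_
    · rintro (_ | i)
      · exact hUc
      · exact (f i).isClosedMap _ isClosed_closure
    · rintro (_ | i)
      · exact hφ.congr fun x hx => hTΩ Ψ x hx
      · have : ContinuousOn (fun x => g i (Ψ ((f i).symm x))) (f i '' closure Q) :=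
          ((hgc i).comp (hΨc.comp (f i).symm.continuous)).continuousOn
        refine this.congr ?_
        rintro _ ⟨z, hz, rfl⟩
        rw [hTcl Ψ hΨ i z hz]; simp
  obtain ⟨Ψ0, hΨ0⟩ := ContinuousMap.exists_restrict_eq hUc
    (⟨fun x : (Uᶜ : Set E) => φ x, continuousOn_iff_continuous_domRestrict.1 hφ⟩ : C((Uᶜ : Set E), E))
  have hΨ0' : ∀ x ∈ Uᶜ, Ψ0 x = φ x := fun x hx => congrArg (fun T => T ⟨x, hx⟩) hΨ0
  let Ψ : ℕ → E → E := fun k => T^[k] Ψ0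
  have hΨs : ∀ k, Ψ (k+1) = T (Ψ k) := fun k => Function.iterate_succ_apply' T k _
  have hΨΩ : ∀ k, ∀ x ∈ Uᶜ, Ψ k x = φ x := by
    intro k
    cases k with
    | zero => exact hΨ0'
    | succ k => intro x hx; rw [hΨs]; exact hTΩ _ x hx
  have hΨc : ∀ k, Continuous (Ψ k) := by
    intro k
    induction k with
    | zero => exact Ψ0.continuous
    | succ k ih => rw [hΨs]; exact hTc _ ih (hΨΩ k)
  obtain ⟨M, hM⟩ := hQc.exists_bound_of_continuousOn (f := fun x => dist (Ψ 1 x) (Ψ 0 x))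
    ((hΨc 1).dist (hΨc 0)).continuousOn
  have hgeo : ∀ k x, dist (Ψ k x) (Ψ (k+1) x) ≤ max M 0 * ρ ^ k := by
    intro k
    induction k with
    | zero =>
      intro x
      by_cases hx : x ∈ U
      · have := hM x (subset_closure (hUQ hx))
        rw [Real.norm_of_nonneg dist_nonneg] at this
        rw [dist_comm]
        simpa using Or.inl this
      · rw [hΨΩ 0 x hx, hΨΩ 1 x hx, dist_self]; positivity
    | succ k ih =>
      intro x
      by_cases hx : x ∈ U
      · obtain ⟨i, z, hz, rfl⟩ := mem_iUnion.1 hx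
        rw [hΨs (k+1), hTQ _ i z hz, hΨs k, hTQ _ i z hz, ← hΨs k]
        calc _ ≤ ρ * dist (Ψ k z) (Ψ (k+1) z) := hg _ _ _
          _ ≤ ρ * (max M 0 * ρ ^ k) := by gcongr; exact ih z
          _ = _ := by ring
      · rw [hΨΩ _ x hx, hΨΩ _ x hx, dist_self]; positivity
  have hlim : ∀ x, ∃ y, Tendsto (fun k => Ψ k x) atTop (𝓝 y) := fun x =>
    cauchySeq_tendsto_of_complete (cauchySeq_of_le_geometric ρ _ hρ1 fun k => hgeo k x)
  choose Φ hΦ using hlim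
  have hunif : TendstoUniformly Ψ Φ atTop := by
    rw [Metric.tendstoUniformly_iff]
    intro ε hε
    have ht : Tendsto (fun k : ℕ => max M 0 * ρ ^ k / (1 - ρ)) atTop (𝓝 (max M 0 * 0 / (1 - ρ))) :=
      ((tendsto_pow_atTop_nhds_zero_of_lt_one hρ0 hρ1).const_mul _).div_const _
    rw [mul_zero, zero_div] at ht
    filter_upwards [ht.eventually (gt_mem_nhds hε)] with k hk x
    rw [dist_comm]
    exact (dist_le_of_le_geometric_of_tendsto ρ _ hρ1 (fun k => hgeo k x) (hΦ x) k).trans_lt hk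
  refine ⟨Φ, hunif.continuous (Frequently.of_forall hΨc), ?_, ?_⟩
  · intro x hx
    refine tendsto_nhds_unique (hΦ x) ?_
    simp only [hΨΩ _ x hx]
    exact tendsto_const_nhds
  · intro i x hx
    refine tendsto_nhds_unique ((tendsto_add_atTop_iff_nat 1).2 (hΦ (f i x))) ?_
    have : ∀ k, Ψ (k+1) (f i x) = g i (Ψ k x) := fun k => by
      rw [hΨs]; exact hTcl _ (hΨΩ k) i x hx
    simp only [this]
    exact ((hgc i).tendsto _).comp (hΦ x)


/-- An injective continuous map on `Ω` is open at interior points. -/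
lemma qp_open_at {E : Type*} [NormedAddCommGroup E] [InnerProductSpace ℝ E]
    [FiniteDimensional ℝ E] [MeasurableSpace E] [BorelSpace E] [Nontrivial E]
    {φ : E → E} {Ω : Set E} (hc : ContinuousOn φ Ω) (hi : InjOn φ Ω) {W : Set E} (hW : W ⊆ Ω)
    {y : E} (hy : W ∈ 𝓝 y) : φ '' W ∈ 𝓝 (φ y) := by
  obtain ⟨r, hr, hrW⟩ := Metric.nhds_basis_closedBall.mem_iff.1 hy
  exact Filter.mem_of_superset
    (qp_inv_domain φ y hr (hc.mono (hrW.trans hW)) (hi.mono (hrW.trans hW))) (image_mono hrW)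

lemma qp_loc_const_mem {E : Type*} [TopologicalSpace E] {A : Set E} {p : E}
    (hp : p ∉ frontier A) : ∀ᶠ z in 𝓝 p, (z ∈ A ↔ p ∈ A) := by
  by_cases hpA : p ∈ A
  · have : p ∈ interior A := by
      by_contra h
      exact hp ⟨subset_closure hpA, h⟩
    filter_upwards [mem_interior_iff_mem_nhds.1 this] with z hz
    simp [hz, hpA]
  · have : p ∉ closure A := by
      intro h
      exact hp ⟨h, fun h' => hpA (interior_subset h')⟩
    filter_upwards [isClosed_closure.isOpen_compl.mem_nhds this] with z hz
    simp only [hpA, iff_false]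
    exact fun h => hz (subset_closure h)

lemma qp_newS {E ι : Type*} [NormedAddCommGroup E] [InnerProductSpace ℝ E]
    [FiniteDimensional ℝ E] [MeasurableSpace E] [BorelSpace E] [Nontrivial E] [Fintype ι]
    (f g : ι → E ≃ₜ E) (Q S : Set E)
    (hQo : IsOpen Q) (hQb : Bornology.IsBounded Q)
    (hSo : IsOpen S) (hSb : Bornology.IsBounded S)
    (hsub : ∀ i, f i '' closure Q ⊆ Q)
    (hdisj : ∀ i j, i ≠ j → Disjoint (f i '' closure Q) (f j '' closure Q))
    (hsubS : ∀ i, g i '' closure S ⊆ S)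
    (hgb : ∀ i, ∀ A : Set E, Bornology.IsBounded A → Bornology.IsBounded (g i '' A))
    (φ ψ : E → E) (hφc : ContinuousOn φ (⋃ i, f i '' Q)ᶜ) (hψc : ContinuousOn ψ (⋃ i, g i '' S)ᶜ)
    (hφm : ∀ x ∈ (⋃ i, f i '' Q)ᶜ, φ x ∈ (⋃ i, g i '' S)ᶜ)
    (hψm : ∀ x ∈ (⋃ i, g i '' S)ᶜ, ψ x ∈ (⋃ i, f i '' Q)ᶜ)
    (hψφ : ∀ x ∈ (⋃ i, f i '' Q)ᶜ, ψ (φ x) = x)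
    (hφψ : ∀ x ∈ (⋃ i, g i '' S)ᶜ, φ (ψ x) = x)
    {ε : ℝ} (hε : 0 < ε)
    (hcompat : ∀ y ∉ Q, Metric.infDist y Q ≤ ε → ∀ i, φ (f i y) = g i (φ y)) :
    ∃ S' : Set E, IsOpen S' ∧ Bornology.IsBounded S' ∧ (⋃ i, g i '' S') = (⋃ i, g i '' S) ∧
      (∀ i, g i '' closure S' ⊆ S') ∧
      (∀ i j, i ≠ j → Disjoint (g i '' closure S') (g j '' closure S')) ∧
      frontier S' = φ '' frontier Q ∧
      (∀ x ∈ (⋃ i, f i '' Q)ᶜ, (φ x ∈ S' ↔ x ∈ Q)) := by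
  classical
  set U := ⋃ i, f i '' Q with hU
  set V := ⋃ i, g i '' S with hV
  have hUo : IsOpen U := isOpen_iUnion fun i => (f i).isOpenMap _ hQo
  have hVo : IsOpen V := isOpen_iUnion fun i => (g i).isOpenMap _ hSo
  have hUc : IsClosed Uᶜ := hUo.isClosed_compl
  have hVc : IsClosed Vᶜ := hVo.isClosed_compl
  have hUQ : U ⊆ Q := iUnion_subset fun i => (image_mono subset_closure).trans (hsub i)
  have hVS : V ⊆ S := iUnion_subset fun i => (image_mono subset_closure).trans (hsubS i)
  have hQΩ : Qᶜ ⊆ Uᶜ := compl_subset_compl.2 hUQ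
  have hφi : InjOn φ Uᶜ := fun x hx y hy h => by rw [← hψφ x hx, h, hψφ y hy]
  have hfr : ∀ z, z ∈ frontier Q ↔ z ∈ closure Q ∧ z ∉ Q := fun z => by
    rw [hQo.frontier_eq]; rfl
  have hfrU : ∀ i, ∀ z ∈ frontier Q, f i z ∈ Uᶜ := by
    intro i z hz hmem
    obtain ⟨hz, hzQ⟩ := (hfr z).1 hz
    obtain ⟨j, w, hw, hwz⟩ := mem_iUnion.1 hmem
    by_cases hij : i = j
    · subst hij
      exact hzQ ((f i).injective hwz ▸ hw)
    · exact Set.disjoint_left.1 (hdisj i j hij) (mem_image_of_mem _ hz)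
        ⟨w, subset_closure hw, hwz⟩
  have hclU : closure U = ⋃ i, f i '' closure Q := by
    rw [hU, closure_iUnion_of_finite]
    simp only [(f _).image_closure]
  have hclUQ : closure U ⊆ Q := by rw [hclU]; exact iUnion_subset hsub
  -- compatibility on the frontier
  have hcf : ∀ i, ∀ y ∈ frontier Q, φ (f i y) = g i (φ y) := by
    intro i y hy
    obtain ⟨hy, hyQ⟩ := (hfr y).1 hy
    refine hcompat y hyQ ?_ i
    rw [Metric.infDist_zero_of_mem_closure hy]; exact hε.le
  set S' : Set E := (φ '' Qᶜ)ᶜ with hS'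
  have himg : φ '' Qᶜ = Vᶜ ∩ ψ ⁻¹' Qᶜ := by
    ext z; constructor
    · rintro ⟨x, hx, rfl⟩
      refine ⟨hφm x (hQΩ hx), ?_⟩
      rw [mem_preimage, hψφ x (hQΩ hx)]; exact hx
    · rintro ⟨hz, hz'⟩
      exact ⟨ψ z, hz', hφψ z hz⟩
  have hS'o : IsOpen S' := by
    rw [hS', isOpen_compl_iff, himg]
    exact hψc.preimage_isClosed_of_isClosed hVc hQo.isClosed_compl
  have hmem : ∀ x ∈ Uᶜ, (φ x ∈ S' ↔ x ∈ Q) := by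
    intro x hx
    rw [hS', himg]
    simp only [mem_compl_iff, mem_inter_iff, mem_preimage, hψφ x hx, not_and, not_not]
    exact ⟨fun h => h (hφm x hx), fun h _ => h⟩
  have hVS' : V ⊆ S' := by
    rintro z hz ⟨x, hx, rfl⟩
    exact hφm x (hQΩ hx) hz
  have hS'b : Bornology.IsBounded S' := by
    have hc : IsCompact (φ '' (closure Q ∩ Uᶜ)) :=
      (hQb.isCompact_closure.inter_right hUc).image_of_continuousOn (hφc.mono inter_subset_right)
    refine ((hSb.subset hVS).union hc.isBounded).subset ?_
    intro z hz
    by_cases hzV : z ∈ V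
    · exact Or.inl hzV
    · refine Or.inr ⟨ψ z, ⟨subset_closure ?_, hψm z hzV⟩, hφψ z hzV⟩
      rw [← hmem _ (hψm z hzV), hφψ z hzV]; exact hz
  have hfrS' : frontier S' = φ '' frontier Q := by
    rw [hS'o.frontier_eq]
    ext p; constructor
    · rintro ⟨hp, hp'⟩
      obtain ⟨y, hy, rfl⟩ := not_not.1 hp'
      refine ⟨y, (hfr y).2 ⟨?_, hy⟩, rfl⟩
      by_contra hcl
      have hn : Qᶜ ∈ 𝓝 y := Filter.mem_of_superset (isClosed_closure.isOpen_compl.mem_nhds hcl)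
        (compl_subset_compl.2 subset_closure)
      have := qp_open_at hφc hφi hQΩ hn
      obtain ⟨z, hz, hz'⟩ := mem_closure_iff_nhds.1 hp _ this
      exact hz' hz
    · rintro ⟨y, hy, rfl⟩
      obtain ⟨hycl, hyQ⟩ := (hfr y).1 hy
      refine ⟨?_, fun h => hyQ ((hmem y (hQΩ hyQ)).1 h)⟩
      have hyU : Uᶜ ∈ 𝓝 y := Filter.mem_of_superset
        (isClosed_closure.isOpen_compl.mem_nhds fun h => hyQ (hclUQ h))
        (compl_subset_compl.2 subset_closure)
      have h1 : y ∈ closure (Q ∩ Uᶜ) := by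
        rw [mem_closure_iff_nhds]
        intro t ht
        obtain ⟨z, hz, hzQ⟩ := mem_closure_iff_nhds.1 hycl _ (inter_mem ht hyU)
        exact ⟨z, hz.1, hzQ, hz.2⟩
      refine ((hφc y (hQΩ hyQ)).mono inter_subset_right).mem_closure h1 ?_
      rintro x ⟨hx, hxU⟩
      exact (hmem x hxU).2 hx
  -- near the common frontier, V coincides with the image of the new set
  have hloc : ∀ i, ∀ y ∈ frontier Q, ∀ᶠ z in 𝓝 (g i (φ y)), (z ∈ V ↔ z ∈ g i '' S') := by
    intro i y hy
    obtain ⟨hycl, hyQ⟩ := (hfr y).1 hy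
    have hinf : IsOpen {w | Metric.infDist w Q < ε} :=
      isOpen_lt (Metric.continuous_infDist_pt Q) continuous_const
    have hyinf : y ∈ {w | Metric.infDist w Q < ε} := by
      rw [mem_setOf_eq, Metric.infDist_zero_of_mem_closure hycl]; exact hε
    have hp : φ (f i y) = g i (φ y) := hcf i y hy
    have hA : ∀ᶠ z in 𝓝 (g i (φ y)), z ∉ V → z ∉ g i '' S' := by
      have hpΩ : g i (φ y) ∈ Vᶜ := by rw [← hp]; exact hφm _ (hfrU i y hy)
      have h1 : Tendsto ψ (𝓝[Vᶜ] (g i (φ y))) (𝓝 (f i y)) := by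
        have := hψc _ hpΩ
        rw [ContinuousWithinAt] at this
        rw [← hp, hψφ _ (hfrU i y hy), hp] at this
        exact this
      have h2 : f i '' {w | Metric.infDist w Q < ε} ∈ 𝓝 (f i y) :=
        ((f i).isOpenMap _ hinf).mem_nhds (mem_image_of_mem _ hyinf)
      have h3 := h1.eventually h2
      rw [eventually_nhdsWithin_iff] at h3
      filter_upwards [h3] with z hz hzV
      obtain ⟨w, hw, hwz⟩ := hz hzV
      have hwQ : w ∉ Q := fun h => hψm z hzV (by
        rw [← hwz]; exact mem_iUnion.2 ⟨i, mem_image_of_mem _ h⟩)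
      have hzg : z = g i (φ w) := by
        rw [← hcompat w hwQ (le_of_lt hw) i, hwz, hφψ z hzV]
      rintro ⟨q, hq, hqz⟩
      rw [hzg] at hqz
      have := (g i).injective hqz
      rw [this] at hq
      exact hwQ ((hmem w (hQΩ hwQ)).1 hq)
    have hB : ∀ᶠ z in 𝓝 (g i (φ y)), z ∉ g i '' S' → z ∉ V := by
      set M : Set E := {w | Metric.infDist w Q < ε} ∩
        f i ⁻¹' (⋃ j : {j // j ≠ i}, f j '' closure Q)ᶜ with hM
      have hMo : M ∈ 𝓝 y := by
        refine (hinf.inter (IsOpen.preimage (f i).continuous ?_)).mem_nhds ⟨hyinf, ?_⟩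
        · exact (isClosed_iUnion_of_finite fun j : {j // j ≠ i} =>
            (f j).isClosedMap _ isClosed_closure).isOpen_compl
        · intro h
          obtain ⟨j, hj⟩ := mem_iUnion.1 h
          exact Set.disjoint_left.1 (hdisj _ _ j.2) hj (mem_image_of_mem _ hycl)
      have h1 : Tendsto ψ (𝓝[Vᶜ] (φ y)) (𝓝 y) := by
        have := hψc _ (hφm y (hQΩ hyQ))
        rw [ContinuousWithinAt, hψφ y (hQΩ hyQ)] at this
        exact this
      have h2 := h1.eventually hMo
      rw [eventually_nhdsWithin_iff] at h2
      have h3 : Tendsto (g i).symm (𝓝 (g i (φ y))) (𝓝 (φ y)) := by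
        have := (g i).symm.continuous.tendsto (g i (φ y))
        rwa [(g i).symm_apply_apply] at this
      filter_upwards [h3.eventually h2] with z hz hzS
      set q := (g i).symm z with hq
      have hzq : z = g i q := by simp [hq]
      have hqS : q ∉ S' := fun h => hzS ⟨q, h, hzq.symm⟩
      obtain ⟨w, hw, hwq⟩ := not_not.1 hqS
      have hwM : w ∈ M := by
        have := hz (by rw [← hwq]; exact hφm w (hQΩ hw))
        rwa [← hwq, hψφ w (hQΩ hw)] at this
      have hfw : f i w ∈ Uᶜ := by
        intro h
        obtain ⟨j, v, hv, hvw⟩ := mem_iUnion.1 h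
        by_cases hij : j = i
        · subst hij
          exact hw ((f j).injective hvw ▸ hv)
        · exact hwM.2 (mem_iUnion.2 ⟨⟨j, hij⟩, v, subset_closure hv, hvw⟩)
      rw [hzq, ← hwq, ← hcompat w hw (le_of_lt hwM.1) i]
      exact hφm _ hfw
    filter_upwards [hA, hB] with z h1 h2
    tauto
  have hfrV : ∀ p ∈ frontier V, ∃ i, ∃ y ∈ frontier Q, p = g i (φ y) := by
    intro p hp
    rw [hVo.frontier_eq] at hp
    obtain ⟨hpcl, hpV⟩ := hp
    have hxU := hψm p hpV
    have hxcl : ψ p ∈ closure U := by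
      by_contra hcl
      have hn : Uᶜ ∈ 𝓝 (ψ p) := Filter.mem_of_superset
        (isClosed_closure.isOpen_compl.mem_nhds hcl) (compl_subset_compl.2 subset_closure)
      have := qp_open_at hφc hφi Subset.rfl hn
      rw [hφψ p hpV] at this
      obtain ⟨z, ⟨x, hx, rfl⟩, hz'⟩ := mem_closure_iff_nhds.1 hpcl _ this
      exact hφm x hx hz'
    rw [hclU] at hxcl
    obtain ⟨i, w, hw, hwx⟩ := mem_iUnion.1 hxcl
    have hwQ : w ∉ Q := fun h => hxU (by
      rw [← hwx]; exact mem_iUnion.2 ⟨i, mem_image_of_mem _ h⟩)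
    have hwf := (hfr w).2 ⟨hw, hwQ⟩
    exact ⟨i, w, hwf, by rw [← hcf i w hwf, hwx, hφψ p hpV]⟩
  have hfrg : ∀ j, frontier (g j '' S') = g j '' (φ '' frontier Q) := by
    intro j
    rw [← (g j).image_frontier, hfrS']
  have hdis0 : ∀ i j, i ≠ j → ∀ y ∈ frontier Q, ∀ y' ∈ frontier Q, g i (φ y) ≠ g j (φ y') := by
    intro i j hij y hy y' hy' h
    rw [← hcf i y hy, ← hcf j y' hy'] at h
    have := hφi (hfrU i y hy) (hfrU j y' hy') h
    exact Set.disjoint_left.1 (hdisj i j hij) (mem_image_of_mem _ ((hfr y).1 hy).1)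
      (this ▸ mem_image_of_mem _ ((hfr y').1 hy').1)
  let F : E → ℤ := fun z => (∑ i, if z ∈ g i '' S' then (1:ℤ) else 0) - if z ∈ V then 1 else 0
  have hFloc : IsLocallyConstant F := by
    rw [IsLocallyConstant.iff_eventually_eq]
    intro p
    by_cases hex : ∃ i, ∃ y ∈ frontier Q, p = g i (φ y)
    · obtain ⟨i, y, hy, rfl⟩ := hex
      have h1 := hloc i y hy
      have h2 : ∀ᶠ z in 𝓝 (g i (φ y)), ∀ j, j ≠ i → (z ∈ g j '' S' ↔ g i (φ y) ∈ g j '' S') := by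
        rw [eventually_all]
        intro j
        by_cases hji : j = i
        · simp [hji]
        · have : g i (φ y) ∉ frontier (g j '' S') := by
            rw [hfrg]
            rintro ⟨_, ⟨y', hy', rfl⟩, h⟩
            exact hdis0 j i hji y' hy' y hy h
          filter_upwards [qp_loc_const_mem this] with z hz _ using hz
      have h1' := h1.self_of_nhds
      filter_upwards [h1, h2] with z hz1 hz2
      simp only [F]
      rw [← Finset.add_sum_erase _ _ (Finset.mem_univ i),
        ← Finset.add_sum_erase (a := i) _ _ (Finset.mem_univ i)]
      simp only [hz1, h1', add_sub_cancel_left]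
      refine Finset.sum_congr rfl fun j hj => ?_
      simp only [hz2 j (Finset.ne_of_mem_erase hj)]
    · have h1 : ∀ᶠ z in 𝓝 p, ∀ j, (z ∈ g j '' S' ↔ p ∈ g j '' S') := by
        rw [eventually_all]
        intro j
        refine qp_loc_const_mem ?_
        rw [hfrg]
        rintro ⟨_, ⟨y', hy', rfl⟩, h⟩
        exact hex ⟨j, y', hy', h.symm⟩
      have h2 : ∀ᶠ z in 𝓝 p, (z ∈ V ↔ p ∈ V) := qp_loc_const_mem fun h => hex (hfrV p h)
      filter_upwards [h1, h2] with z hz1 hz2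
      simp only [F, hz1, hz2]
  have hF0 : ∀ z, F z = 0 := by
    have hb : Bornology.IsBounded (V ∪ ⋃ i, g i '' S') :=
      (hSb.subset hVS).union ((Bornology.isBounded_iUnion).2 fun i => hgb i _ hS'b)
    obtain ⟨p, hp⟩ : ∃ p, p ∉ V ∪ ⋃ i, g i '' S' := by
      by_contra hall
      push Not at hall
      exact NormedSpace.unbounded_univ ℝ E (hb.subset fun p _ => hall p)
    have hFp : F p = 0 := by
      simp only [mem_union, mem_iUnion, not_or, not_exists] at hp
      simp [F, hp.1]
      intro i x hx hxp
      exact hp.2 i ⟨x, hx, hxp⟩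
    intro z
    rw [hFloc.apply_eq_of_isPreconnected isPreconnected_univ (mem_univ z) (mem_univ p), hFp]
  have hVmem : ∀ z i, z ∈ g i '' S' → z ∈ V ∧ ∀ j, j ≠ i → z ∉ g j '' S' := by
    intro z i hz
    have h0 := hF0 z
    simp only [F] at h0
    rw [← Finset.add_sum_erase _ _ (Finset.mem_univ i), if_pos hz] at h0
    have hnn : ∀ j ∈ Finset.univ.erase i, (0:ℤ) ≤ if z ∈ g j '' S' then (1:ℤ) else 0 := by
      intro j _; split_ifs <;> norm_num
    have hs := Finset.sum_nonneg hnn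
    by_cases hzV : z ∈ V
    · refine ⟨hzV, fun j hj hzj => ?_⟩
      rw [if_pos hzV] at h0
      have hs0 : ∑ j ∈ Finset.univ.erase i, (if z ∈ g j '' S' then (1:ℤ) else 0) = 0 := by linarith
      have := (Finset.sum_eq_zero_iff_of_nonneg hnn).1 hs0 j (by simp [hj])
      rw [if_pos hzj] at this
      exact one_ne_zero this
    · rw [if_neg hzV] at h0
      linarith
  have hUn : (⋃ i, g i '' S') = V := by
    ext z; constructor
    · intro hz
      obtain ⟨i, hi⟩ := mem_iUnion.1 hz
      exact (hVmem z i hi).1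
    · intro hz
      by_contra hno
      simp only [mem_iUnion, not_exists] at hno
      have h0 := hF0 z
      simp only [F] at h0
      rw [if_pos hz, Finset.sum_eq_zero fun i _ => if_neg (hno i)] at h0
      norm_num at h0
  have hcl : ∀ z, z ∈ closure S' → z ∈ S' ∨ ∃ y ∈ frontier Q, z = φ y := by
    intro z hz
    by_cases hzS : z ∈ S'
    · exact Or.inl hzS
    · have : z ∈ frontier S' := by rw [hS'o.frontier_eq]; exact ⟨hz, hzS⟩
      rw [hfrS'] at this
      obtain ⟨y, hy, rfl⟩ := this
      exact Or.inr ⟨y, hy, rfl⟩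
  refine ⟨S', hS'o, hS'b, hUn, ?_, ?_, hfrS', hmem⟩
  · rintro i _ ⟨z, hz, rfl⟩
    rcases hcl z hz with h | ⟨y, hy, rfl⟩
    · exact hVS' (hVmem _ i (mem_image_of_mem _ h)).1
    · rw [← hcf i y hy, hmem _ (hfrU i y hy)]
      exact hsub i (mem_image_of_mem _ ((hfr y).1 hy).1)
  · intro i j hij
    have hΩ' : ∀ i, ∀ y ∈ frontier Q, g i (φ y) ∉ V := fun i y hy => by
      rw [← hcf i y hy]; exact hφm _ (hfrU i y hy)
    rw [Set.disjoint_left]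
    rintro z ⟨a, ha, rfl⟩ ⟨b, hb, hab⟩
    rcases hcl a ha with h | ⟨y, hy, rfl⟩ <;> rcases hcl b hb with h' | ⟨y', hy', rfl⟩
    · exact (hVmem _ i (mem_image_of_mem _ h)).2 j (Ne.symm hij) ⟨b, h', hab⟩
    · exact hΩ' j y' hy' (hab ▸ (hVmem _ i (mem_image_of_mem _ h)).1)
    · exact hΩ' i y hy (hab ▸ (hVmem _ j (mem_image_of_mem _ h')).1)
    · exact hdis0 j i (Ne.symm hij) y' hy' y hy hab


lemma qp_maps {E ι : Type*} [MetricSpace E] [ProperSpace E] (f g : ι → E → E) (Q S : Set E)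
    (hQb : Bornology.IsBounded Q) (hSne : S.Nonempty)
    (hsubS : ∀ i, g i '' closure S ⊆ S)
    {ρ : ℝ} (hρ0 : 0 ≤ ρ) (hρ1 : ρ < 1) (hg : ∀ i x y, dist (g i x) (g i y) ≤ ρ * dist x y)
    (Φ : E → E) (hΦ : Continuous Φ)
    (h0 : ∀ x ∈ closure Q, x ∉ ⋃ i, f i '' Q → Φ x ∈ closure S)
    (hcom : ∀ i, ∀ x ∈ closure Q, Φ (f i x) = g i (Φ x)) :
    ∀ x ∈ closure Q, Φ x ∈ closure S := by
  have hcl : (closure S).Nonempty := hSne.closure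
  have hc : Continuous (fun x => infDist (Φ x) (closure S)) := (continuous_infDist_pt _).comp hΦ
  obtain ⟨M, hM⟩ := (hQb.isCompact_closure.image hc).bddAbove
  have key := qp_vanish f Q (fun x => infDist (Φ x) (closure S)) (M := M) hρ0 hρ1
    (fun x hx => hM ⟨x, hx, rfl⟩)
    (fun x hx hxU => (infDist_zero_of_mem (h0 x hx hxU)).le)
    (by
      intro i x hx
      rw [hcom i x (subset_closure hx)]
      obtain ⟨s, hs, hsd⟩ := isClosed_closure.exists_infDist_eq_dist hcl (Φ x)
      rw [hsd]
      exact (infDist_le_dist_of_mem (subset_closure (hsubS i ⟨s, hs, rfl⟩))).trans (hg i _ _))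
  intro x hx
  have := key x hx
  rw [isClosed_closure.mem_iff_infDist_zero hcl]
  exact le_antisymm this infDist_nonneg

lemma qp_inv {E ι : Type*} [MetricSpace E] [ProperSpace E] (f g : ι → E → E) (Q S : Set E)
    (hQb : Bornology.IsBounded Q)
    {ρ : ℝ} (hρ0 : 0 ≤ ρ) (hρ1 : ρ < 1) (hf : ∀ i x y, dist (f i x) (f i y) ≤ ρ * dist x y)
    (Φ Ψ : E → E) (hΦ : Continuous Φ) (hΨ : Continuous Ψ)
    (hm : ∀ x ∈ closure Q, Φ x ∈ closure S)
    (h0 : ∀ x ∉ ⋃ i, f i '' Q, Ψ (Φ x) = x)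
    (hsub : ∀ i, f i '' closure Q ⊆ Q)
    (hcom : ∀ i, ∀ x ∈ closure Q, Φ (f i x) = g i (Φ x))
    (hcom2 : ∀ i, ∀ x ∈ closure S, Ψ (g i x) = f i (Ψ x)) :
    ∀ x, Ψ (Φ x) = x := by
  have hc : Continuous (fun x => dist (Ψ (Φ x)) x) := (hΨ.comp hΦ).dist continuous_id
  obtain ⟨M, hM⟩ := (hQb.isCompact_closure.image hc).bddAbove
  have key := qp_vanish f Q (fun x => dist (Ψ (Φ x)) x) (M := M) hρ0 hρ1
    (fun x hx => hM ⟨x, hx, rfl⟩)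
    (fun x hx hxU => by simp [h0 x hxU])
    (by
      intro i x hx
      rw [hcom i x (subset_closure hx), hcom2 i _ (hm x (subset_closure hx))]
      exact hf i _ _)
  intro x
  by_cases hx : x ∈ ⋃ i, f i '' Q
  · obtain ⟨i, y, hy, rfl⟩ := mem_iUnion.1 hx
    exact dist_le_zero.1 (key _ (subset_closure (hsub i ⟨y, subset_closure hy, rfl⟩)))
  · exact h0 x hx

lemma qp_homeo {E ι : Type*} [NormedAddCommGroup E] [InnerProductSpace ℝ E]
    [FiniteDimensional ℝ E] [MeasurableSpace E] [BorelSpace E] [Nontrivial E] [Fintype ι]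
    [Nonempty ι]
    (f g : ι → E ≃ₜ E) (Q S : Set E)
    (hQo : IsOpen Q) (hQb : Bornology.IsBounded Q)
    (hSo : IsOpen S) (hSb : Bornology.IsBounded S)
    (hsub : ∀ i, f i '' closure Q ⊆ Q)
    (hdisj : ∀ i j, i ≠ j → Disjoint (f i '' closure Q) (f j '' closure Q))
    (hsubS : ∀ i, g i '' closure S ⊆ S)
    {ρ : ℝ} (hρ0 : 0 ≤ ρ) (hρ1 : ρ < 1)
    (hf : ∀ i x y, dist (f i x) (f i y) ≤ ρ * dist x y)
    (hg : ∀ i x y, dist (g i x) (g i y) ≤ ρ * dist x y)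
    (φ : E → E) (hφ : IsHomeoOn φ (⋃ i, f i '' Q)ᶜ (⋃ i, g i '' S)ᶜ)
    {ε : ℝ} (hε : 0 < ε)
    (hcompat : ∀ y ∉ Q, Metric.infDist y Q ≤ ε → ∀ i, φ (f i y) = g i (φ y)) :
    ∃ (S' : Set E) (Φ : E ≃ₜ E), IsOpen S' ∧ Bornology.IsBounded S' ∧
      (⋃ i, g i '' S') = (⋃ i, g i '' S) ∧
      (∀ i, g i '' closure S' ⊆ S') ∧
      (∀ i j, i ≠ j → Disjoint (g i '' closure S') (g j '' closure S')) ∧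
      (∀ x ∈ (⋃ i, f i '' Q)ᶜ, Φ x = φ x) ∧
      (∀ i, ∀ x ∈ closure Q, Φ (f i x) = g i (Φ x)) ∧
      Φ '' Q = S' := by
  classical
  set U := ⋃ i, f i '' Q with hU
  set V := ⋃ i, g i '' S with hV
  obtain ⟨e, he⟩ := hφ
  have hφc : ContinuousOn φ Uᶜ := by
    rw [continuousOn_iff_continuous_domRestrict]
    have : Uᶜ.domRestrict φ = fun x => (e x : E) := by ext1 x; exact (he x).symm
    rw [this]
    exact continuous_subtype_val.comp e.continuous
  let ψ : E → E := fun z => if h : z ∈ Vᶜ then (e.symm ⟨z, h⟩ : E) else 0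
  have hψd : ∀ z (h : z ∈ Vᶜ), ψ z = e.symm ⟨z, h⟩ := fun z h => dif_pos h
  have hψc : ContinuousOn ψ Vᶜ := by
    rw [continuousOn_iff_continuous_domRestrict]
    have : Vᶜ.domRestrict ψ = fun x => (e.symm x : E) := by
      ext1 x; exact hψd x.1 x.2
    rw [this]
    exact continuous_subtype_val.comp e.symm.continuous
  have hφm : ∀ x ∈ Uᶜ, φ x ∈ Vᶜ := fun x hx => by
    have := he ⟨x, hx⟩
    simp only at this
    rw [← this]; exact (e ⟨x, hx⟩).2
  have hψm : ∀ x ∈ Vᶜ, ψ x ∈ Uᶜ := fun x hx => by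
    rw [hψd x hx]; exact (e.symm ⟨x, hx⟩).2
  have hψφ : ∀ x ∈ Uᶜ, ψ (φ x) = x := fun x hx => by
    rw [hψd _ (hφm x hx)]
    have : (⟨φ x, hφm x hx⟩ : ↑Vᶜ) = e ⟨x, hx⟩ := Subtype.ext (he ⟨x, hx⟩).symm
    rw [this]; simp
  have hφψ : ∀ x ∈ Vᶜ, φ (ψ x) = x := fun x hx => by
    rw [hψd _ hx, ← he]; simp
  have hgb : ∀ i, ∀ A : Set E, Bornology.IsBounded A → Bornology.IsBounded (g i '' A) := by
    intro i A hA
    have : LipschitzWith ⟨ρ, hρ0⟩ (g i) := LipschitzWith.of_dist_le_mul (hg i)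
    exact this.isBounded_image hA
  obtain ⟨S', hS'o, hS'b, hV', hS'sub, hS'disj, hfr, hmem⟩ := qp_newS f g Q S hQo hQb hSo hSb hsub
    hdisj hsubS hgb φ ψ hφc hψc hφm hψm hψφ hφψ hε hcompat
  have hfrQ : ∀ y ∈ frontier Q, y ∉ Q := fun y hy h => by
    rw [hQo.frontier_eq] at hy; exact hy.2 h
  have hUQ : U ⊆ Q := by
    refine iUnion_subset fun i => (image_mono subset_closure).trans (hsub i)
  have hcf : ∀ i, ∀ y ∈ frontier Q, φ (f i y) = g i (φ y) := by
    intro i y hy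
    refine hcompat y (hfrQ y hy) ?_ i
    have : infDist y Q = 0 := by
      have h1 := frontier_subset_closure hy
      exact (mem_closure_iff_infDist_zero (closure_nonempty_iff.1 ⟨y, h1⟩)).1 h1
    rw [this]; exact hε.le
  obtain ⟨Φ, hΦc, hΦφ, hΦf⟩ := qp_extend f (fun i => g i) Q hQo hQb hsub hdisj hρ0 hρ1 hg φ hφc hcf
  have hfU : ∀ i, ∀ y ∈ frontier Q, f i y ∈ Uᶜ := by
    intro i y hy h
    obtain ⟨j, z, hz, hzy⟩ := mem_iUnion.1 h
    by_cases hij : i = j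
    · subst hij
      have := (f i).injective hzy
      exact hfrQ y hy (this ▸ hz)
    · exact (hdisj i j hij).le_bot ⟨⟨y, frontier_subset_closure hy, rfl⟩, ⟨z, subset_closure hz, hzy⟩⟩
  have hcf2 : ∀ i, ∀ y ∈ frontier S', ψ (g i y) = f i (ψ y) := by
    intro i y hy
    rw [hfr] at hy
    obtain ⟨x, hx, rfl⟩ := hy
    rw [← hcf i x hx, hψφ _ (hfU i x hx), hψφ x (fun h => hfrQ x hx (hUQ h))]
  obtain ⟨Ψ, hΨc, hΨψ, hΨg⟩ := qp_extend g (fun i => f i) S' hS'o hS'b hS'sub hS'disj hρ0 hρ1 hf ψ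
    (by rw [hV']; exact hψc) hcf2
  rw [hV'] at hΨψ
  have hne : S'.Nonempty ↔ Q.Nonempty := by
    have aux : ∀ A : Set E, IsOpen A → Bornology.IsBounded A → A.Nonempty →
        (frontier A).Nonempty := by
      intro A hAo hAb hA
      rw [nonempty_frontier_iff]
      refine ⟨hA, ?_⟩
      rintro rfl
      exact NormedSpace.unbounded_univ ℝ E hAb
    constructor
    · intro h
      have := aux S' hS'o hS'b h
      rw [hfr, image_nonempty] at this
      exact closure_nonempty_iff.1 (this.mono frontier_subset_closure)
    · intro h
      have := aux Q hQo hQb h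
      have h2 : (frontier S').Nonempty := by rw [hfr]; exact this.image _
      exact closure_nonempty_iff.1 (h2.mono frontier_subset_closure)
  have hm1 : ∀ x ∈ closure Q, Φ x ∈ closure S' := by
    intro x hx
    have hQne : Q.Nonempty := closure_nonempty_iff.1 ⟨x, hx⟩
    refine qp_maps (fun i => f i) (fun i => g i) Q S' hQb (hne.2 hQne) hS'sub hρ0 hρ1 hg Φ hΦc ?_
      hΦf x hx
    intro y hy hyU
    rw [hΦφ y hyU]
    by_cases hyQ : y ∈ Q
    · exact subset_closure ((hmem y hyU).2 hyQ)
    · apply frontier_subset_closure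
      rw [hfr]
      exact ⟨y, by rw [hQo.frontier_eq]; exact ⟨hy, hyQ⟩, rfl⟩
  have hm2 : ∀ x ∈ closure S', Ψ x ∈ closure Q := by
    intro x hx
    have hSne : S'.Nonempty := closure_nonempty_iff.1 ⟨x, hx⟩
    refine qp_maps (fun i => g i) (fun i => f i) S' Q hS'b (hne.1 hSne) hsub hρ0 hρ1 hf Ψ hΨc ?_
      hΨg x hx
    intro y hy hyV
    rw [hV'] at hyV
    rw [hΨψ y hyV]
    by_cases hyS : y ∈ S'
    · have := hmem (ψ y) (hψm y hyV)
      rw [hφψ y hyV] at this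
      exact subset_closure (this.1 hyS)
    · have : y ∈ frontier S' := by rw [hS'o.frontier_eq]; exact ⟨hy, hyS⟩
      rw [hfr] at this
      obtain ⟨z, hz, rfl⟩ := this
      rw [hψφ z (fun h => hfrQ z hz (hUQ h))]
      exact frontier_subset_closure hz
  have hi1 : ∀ x, Ψ (Φ x) = x :=
    qp_inv (fun i => f i) (fun i => g i) Q S' hQb hρ0 hρ1 hf Φ Ψ hΦc hΨc hm1
      (fun x hx => by rw [hΦφ x hx, hΨψ _ (hφm x hx), hψφ x hx]) hsub hΦf hΨg
  have hi2 : ∀ x, Φ (Ψ x) = x :=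
    qp_inv (fun i => g i) (fun i => f i) S' Q hS'b hρ0 hρ1 hg Ψ Φ hΨc hΦc hm2
      (fun x hx => by rw [hV'] at hx; rw [hΨψ x hx, hΦφ _ (hψm x hx), hφψ x hx]) hS'sub hΨg hΦf
  let Θ : E ≃ₜ E := ⟨⟨Φ, Ψ, hi1, hi2⟩, hΦc, hΨc⟩
  refine ⟨S', Θ, hS'o, hS'b, hV', hS'sub, hS'disj, hΦφ, hΦf, ?_⟩
  -- image of Q
  have hfrΦ : ∀ x ∈ frontier Q, Φ x ∈ frontier S' := fun x hx => by
    rw [hfr, hΦφ x (fun h => hfrQ x hx (hUQ h))]; exact ⟨x, hx, rfl⟩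
  apply Subset.antisymm
  · rintro _ ⟨x, hx, rfl⟩
    change Φ x ∈ S'
    by_contra h
    have h1 : Φ x ∈ frontier S' := by
      rw [hS'o.frontier_eq]; exact ⟨hm1 x (subset_closure hx), h⟩
    rw [hfr] at h1
    obtain ⟨z, hz, hzx⟩ := h1
    rw [← hΦφ z (fun h => hfrQ z hz (hUQ h))] at hzx
    have : z = x := by rw [← hi1 z, hzx, hi1]
    exact hfrQ z hz (this ▸ hx)
  · intro y hy
    refine ⟨Ψ y, ?_, hi2 y⟩
    by_contra h
    have h1 : Ψ y ∈ frontier Q := by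
      rw [hQo.frontier_eq]; exact ⟨hm2 y (subset_closure hy), h⟩
    have := hfrΦ _ h1
    rw [hi2, hS'o.frontier_eq] at this
    exact this.2 hy


/-- The Hutchinson operator. -/
def qpHut {E ι : Type*} (f : ι → E → E) (X : Set E) : Set E := ⋃ i, f i '' X

lemma qp_level {E ι : Type*} (f : ι → E → E) (C : Set E) (k : ℕ) :
    (⋃ w : Fin k → ι, iterComp f (List.ofFn w) '' C) = (qpHut f)^[k] C := by
  induction k with
  | zero =>
    ext x
    simp [iterComp]
  | succ k ih =>
    rw [Function.iterate_succ_apply', ← ih]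
    ext x
    simp only [qpHut, mem_iUnion, mem_image]
    constructor
    · rintro ⟨w, c, hc, rfl⟩
      refine ⟨w 0, iterComp f (List.ofFn fun j : Fin k => w j.succ) c, ⟨_, c, hc, rfl⟩, ?_⟩
      rw [List.ofFn_succ]
      rfl
    · rintro ⟨i, _, ⟨w, c, hc, rfl⟩, rfl⟩
      refine ⟨Fin.cons i w, c, hc, ?_⟩
      rw [List.ofFn_succ]
      simp [iterComp]

lemma qp_invset {E ι : Type*} [MetricSpace E] (f : ι → E → E) (Q : Set E) :
    invariantSet f Q = ⋂ k : ℕ, (qpHut f)^[k] (closure Q) := by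
  unfold invariantSet
  simp only [qp_level]

lemma qp_hut_mono {E ι : Type*} (f : ι → E → E) {X Y : Set E} (h : X ⊆ Y) :
    qpHut f X ⊆ qpHut f Y := iUnion_mono fun _ => image_mono h

lemma qp_hut_sub {E ι : Type*} (f : ι → E → E) {C : Set E} (hC : qpHut f C ⊆ C) (k : ℕ) :
    (qpHut f)^[k+1] C ⊆ (qpHut f)^[k] C := by
  induction k with
  | zero => exact hC
  | succ k ih =>
    have := qp_hut_mono f ih
    rwa [← Function.iterate_succ_apply' (qpHut f), ← Function.iterate_succ_apply' (qpHut f)] at this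

lemma qp_hut_sub' {E ι : Type*} (f : ι → E → E) {C : Set E} (hC : qpHut f C ⊆ C) (k : ℕ) :
    (qpHut f)^[k] C ⊆ C := by
  induction k with
  | zero => exact Subset.rfl
  | succ k ih => exact (qp_hut_sub f hC k).trans ih

lemma qp_hut_drop {E ι : Type*} (f : ι → E → E) {C : Set E} (hC : qpHut f C ⊆ C) :
    (⋂ k : ℕ, (qpHut f)^[k] C) = ⋂ k : ℕ, (qpHut f)^[k] (qpHut f C) := by
  apply Subset.antisymm
  · refine subset_iInter fun k => ?_
    rw [← Function.iterate_succ_apply]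
    exact iInter_subset _ (k+1)
  · refine subset_iInter fun k => ?_
    refine (iInter_subset _ k).trans ?_
    rw [← Function.iterate_succ_apply]
    exact qp_hut_sub f hC k

lemma qp_hut_closure {E ι : Type*} [TopologicalSpace E] [Finite ι] (g : ι → E ≃ₜ E) (S : Set E) :
    qpHut (fun i => g i) (closure S) = closure (⋃ i, g i '' S) := by
  unfold qpHut
  rw [closure_iUnion_of_finite]
  simp only [Homeomorph.image_closure]

lemma qp_inv_image {E ι : Type*} [MetricSpace E] [Finite ι] (f g : ι → E ≃ₜ E) (Q S S' : Set E)
    (Φ : E ≃ₜ E)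
    (hsub : ∀ i, f i '' closure Q ⊆ Q) (hsubS : ∀ i, g i '' closure S ⊆ S)
    (hsubS' : ∀ i, g i '' closure S' ⊆ S')
    (hV : (⋃ i, g i '' S') = ⋃ i, g i '' S)
    (hcom : ∀ i, ∀ x ∈ closure Q, Φ (f i x) = g i (Φ x))
    (hΦ : Φ '' Q = S') :
    Φ '' invariantSet (fun i => f i) Q = invariantSet (fun i => g i) S := by
  rw [qp_invset, qp_invset]
  have aux : ∀ (h : ι → E ≃ₜ E) (A : Set E), (∀ i, h i '' closure A ⊆ A) →
      qpHut (fun i => h i) (closure A) ⊆ closure A := fun h A hA =>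
    iUnion_subset fun i => (hA i).trans subset_closure
  have h1 : ∀ k, Φ '' ((qpHut (fun i => f i))^[k] (closure Q)) =
      (qpHut (fun i => g i))^[k] (closure S') := by
    intro k
    induction k with
    | zero =>
      simp only [Function.iterate_zero, id]
      rw [Homeomorph.image_closure, hΦ]
    | succ k ih =>
      rw [Function.iterate_succ_apply', Function.iterate_succ_apply', ← ih]
      have hk := qp_hut_sub' (fun i => ⇑(f i)) (aux f Q hsub) k
      generalize (qpHut (fun i => ⇑(f i)))^[k] (closure Q) = A at hk
      unfold qpHut
      rw [image_iUnion]
      refine iUnion_congr fun i => ?_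
      rw [image_image, image_image]
      exact image_congr fun x hx => hcom i x (hk hx)
  rw [image_iInter Φ.bijective]
  simp only [h1]
  rw [qp_hut_drop _ (aux g S' hsubS'), qp_hut_drop _ (aux g S hsubS), qp_hut_closure,
    qp_hut_closure, hV]

lemma qp_K_compact {E ι : Type*} [MetricSpace E] [ProperSpace E] [Finite ι] (f : ι → E ≃ₜ E)
    (Q : Set E) (hQb : Bornology.IsBounded Q) (k : ℕ) :
    IsCompact ((qpHut (fun i => f i))^[k] (closure Q)) := by
  induction k with
  | zero => exact hQb.isCompact_closure
  | succ k ih =>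
    rw [Function.iterate_succ_apply']
    exact isCompact_iUnion fun i => ih.image (f i).continuous

lemma qp_K_self {E ι : Type*} [MetricSpace E] (f : ι → E ≃ₜ E)
    (Q : Set E) (hsub : ∀ i, f i '' closure Q ⊆ Q)
    (hdisj : ∀ i j, i ≠ j → Disjoint (f i '' closure Q) (f j '' closure Q))
    (x : E) (hx : x ∈ ⋂ k : ℕ, (qpHut (fun i => f i))^[k] (closure Q)) :
    ∃ i, ∃ y ∈ ⋂ k : ℕ, (qpHut (fun i => f i))^[k] (closure Q), f i y = x := by
  have hC : qpHut (fun i => f i) (closure Q) ⊆ closure Q :=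
    iUnion_subset fun i => (hsub i).trans subset_closure
  rw [mem_iInter] at hx
  obtain ⟨i, y, hy, hyx⟩ := mem_iUnion.1 (hx 1)
  refine ⟨i, y, mem_iInter.2 fun k => ?_, hyx⟩
  have := hx (k+1)
  rw [Function.iterate_succ_apply'] at this
  obtain ⟨j, z, hz, hzx⟩ := mem_iUnion.1 this
  have hzC := qp_hut_sub' _ hC k hz
  by_cases hij : i = j
  · subst hij
    have : y = z := (f i).injective (hyx.trans hzx.symm)
    rw [this]; exact hz
  · exact ((hdisj i j hij).le_bot ⟨⟨y, hy, hyx⟩, ⟨z, hzC, hzx⟩⟩).elim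


lemma qp_sep {E : Type*} [MetricSpace E] (Φ : E ≃ₜ E) (K : Set E) (hK : IsCompact K) {η : ℝ}
    (hη : 0 < η) : ∃ c > 0, ∀ z ∈ K, ∀ b, η ≤ dist z b → c ≤ dist (Φ z) (Φ b) := by
  have hK' : IsCompact (Φ '' K) := hK.image Φ.continuous
  have := hK'.uniformContinuousAt_of_continuousAt Φ.symm
    (fun a _ => Φ.symm.continuous.continuousAt) (dist_mem_uniformity hη)
  obtain ⟨c, hc, h⟩ := Metric.mem_uniformity_dist.1 this
  refine ⟨c, hc, fun z hz b hb => ?_⟩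
  by_contra hlt
  push Not at hlt
  have h1 := h hlt ⟨z, hz, rfl⟩
  simp at h1
  linarith

lemma qp_qc_transfer {E : Type*} [MetricSpace E] (Φ : E ≃ₜ E) (Ω0 : Set E) (φ0 : E → E)
    (F : E → E) (x y : E) {s s' δ : ℝ} (hs : 0 < s) (hs' : 0 < s') (hδ : 0 < δ)
    (hFy : F y = x) (hFs : Function.Surjective F) (hF : ∀ a b, dist (F a) (F b) = s * dist a b)
    (hloc : ∀ b, dist y b ≤ δ → b ∈ Ω0 ∧ dist (Φ (F y)) (Φ (F b)) = s' * dist (φ0 y) (φ0 b))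
    {H : ℝ} (hH : 1 ≤ H) (hq : qcH Ω0 φ0 y ≤ ENNReal.ofReal H) :
    qcH univ Φ x ≤ ENNReal.ofReal H := by
  refine le_of_forall_gt_imp_ge_of_dense fun b hb => ?_
  by_cases hbt : b = ⊤
  · rw [hbt]
    exact le_top
  have hb1 : 1 < b := lt_of_le_of_lt (by simpa using hH) hb
  have hb0 : b ≠ 0 := (zero_lt_one.trans hb1).ne'
  obtain ⟨c, hc, hsep⟩ := qp_sep Φ {x} isCompact_singleton (mul_pos hs hδ)
  have hlim : Tendsto (fun r : ℝ => r / s) (𝓝[>] 0) (𝓝[>] 0) := by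
    refine tendsto_nhdsWithin_of_tendsto_nhds_of_eventually_within _ ?_ ?_
    · have : Tendsto (fun r : ℝ => r / s) (𝓝 0) (𝓝 (0 / s)) := tendsto_id.div_const s
      rw [zero_div] at this
      exact this.mono_left nhdsWithin_le_nhds
    · filter_upwards [self_mem_nhdsWithin] with r hr
      exact div_pos hr hs
  have e1 : ∀ᶠ r in 𝓝[>] (0 : ℝ), linDil Ω0 φ0 y (r / s) / linCon Ω0 φ0 y (r / s) < b :=
    hlim.eventually (eventually_lt_of_limsup_lt (lt_of_le_of_lt hq hb))
  obtain ⟨η, hη, hηc⟩ := Metric.continuous_iff.1 Φ.continuous x c hc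
  have e2 : ∀ᶠ r in 𝓝[>] (0 : ℝ), r < η :=
    (eventually_lt_nhds hη).filter_mono nhdsWithin_le_nhds
  have e3 : ∀ᶠ r in 𝓝[>] (0 : ℝ), r < s * δ :=
    (eventually_lt_nhds (mul_pos hs hδ)).filter_mono nhdsWithin_le_nhds
  unfold qcH
  refine Filter.limsup_le_of_le (by isBoundedDefault) ?_
  filter_upwards [e1, e2, e3, self_mem_nhdsWithin] with r h1 h2 h3 h4
  apply ENNReal.div_le_of_le_mul
  have h5 : linDil Ω0 φ0 y (r / s) ≤ b * linCon Ω0 φ0 y (r / s) :=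
    (ENNReal.div_le_iff_le_mul (Or.inr hbt) (Or.inr hb0)).1 h1.le
  -- upper bounds for the dilation
  have u1 : linDil univ Φ x r ≤ ENNReal.ofReal s' * linDil Ω0 φ0 y (r / s) := by
    refine iSup₂_le fun w hw => ?_
    obtain ⟨a, rfl⟩ := hFs w
    have hw2 : dist x (F a) ≤ r := hw.2
    rw [← hFy, hF] at hw2
    have hd : dist y a ≤ r / s := by rw [le_div_iff₀ hs]; linarith
    have hd2 : dist y a ≤ δ := by
      refine hd.trans ?_
      rw [div_le_iff₀ hs]; linarith
    obtain ⟨ha, hab⟩ := hloc a hd2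
    rw [← hFy, edist_dist, hab, ENNReal.ofReal_mul hs'.le, ← edist_dist]
    gcongr
    exact le_iSup₂_of_le a ⟨ha, hd⟩ le_rfl
  have u2 : linDil univ Φ x r ≤ ENNReal.ofReal c := by
    refine iSup₂_le fun w hw => ?_
    rw [edist_dist]
    apply ENNReal.ofReal_le_ofReal
    have := hηc w (by rw [dist_comm]; exact lt_of_le_of_lt hw.2 h2)
    rw [dist_comm]; exact this.le
  have l1 : min (ENNReal.ofReal s' * linCon Ω0 φ0 y (r / s)) (ENNReal.ofReal c) ≤
      linCon univ Φ x r := by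
    refine le_iInf₂ fun w hw => ?_
    obtain ⟨a, rfl⟩ := hFs w
    by_cases hd2 : dist y a ≤ δ
    · refine (min_le_left _ _).trans ?_
      have hw2 : r ≤ dist x (F a) := hw.2
      rw [← hFy, hF] at hw2
      have hd : r / s ≤ dist y a := by rw [div_le_iff₀ hs]; linarith
      obtain ⟨ha, hab⟩ := hloc a hd2
      rw [← hFy, edist_dist, hab, ENNReal.ofReal_mul hs'.le, ← edist_dist]
      gcongr
      exact iInf₂_le_of_le a ⟨ha, hd⟩ le_rfl
    · refine (min_le_right _ _).trans ?_
      rw [edist_dist]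
      apply ENNReal.ofReal_le_ofReal
      refine hsep x rfl _ ?_
      rw [← hFy, hF]
      gcongr
      exact (not_le.1 hd2).le
  refine le_trans ?_ (mul_le_mul_right l1 b)
  rcases min_choice (ENNReal.ofReal s' * linCon Ω0 φ0 y (r / s)) (ENNReal.ofReal c) with h | h <;>
    rw [h]
  · refine u1.trans ?_
    calc _ ≤ ENNReal.ofReal s' * (b * linCon Ω0 φ0 y (r / s)) := by gcongr
      _ = _ := by ring
  · refine u2.trans ?_
    calc ENNReal.ofReal c = 1 * ENNReal.ofReal c := (one_mul _).symm
      _ ≤ _ := by gcongr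

/-- Scale selection at points of the attractor. -/
lemma qp_scale {E ι : Type*} [MetricSpace E] (f g : ι → E ≃ₜ E) (Q K : Set E) (Φ : E ≃ₜ E)
    (rf rg : ι → ℝ) (hrf0 : ∀ i, 0 < rf i) (hrg0 : ∀ i, 0 < rg i)
    (hf : ∀ i x y, dist (f i x) (f i y) = rf i * dist x y)
    (hg : ∀ i x y, dist (g i x) (g i y) = rg i * dist x y)
    {ρ m d : ℝ} (hρ0 : 0 < ρ) (hm0 : 0 < m) (hd : 0 < d) (hρ : ∀ i, rf i ≤ ρ) (hm : ∀ i, m ≤ rf i)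
    (hsub : ∀ i, f i '' closure Q ⊆ Q)
    (hK : ∀ x ∈ K, ∃ i, ∃ y ∈ K, f i y = x)
    (hcom : ∀ i, ∀ x ∈ closure Q, Φ (f i x) = g i (Φ x)) (k : ℕ) :
    ∀ x ∈ K, ∀ r, r ≤ d → d * ρ ^ k < r → ∃ (F G : E ≃ₜ E) (s s' : ℝ) (z : E), 0 < s ∧ 0 < s' ∧
      (∀ a b, dist (F a) (F b) = s * dist a b) ∧ (∀ a b, dist (G a) (G b) = s' * dist a b) ∧
      (∀ a ∈ closure Q, F a ∈ closure Q) ∧ (∀ a ∈ closure Q, Φ (F a) = G (Φ a)) ∧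
      z ∈ K ∧ F z = x ∧ r ≤ d * s ∧ m * d * s < r := by
  induction k with
  | zero => intro x _ r h1 h2; simp at h2; linarith
  | succ k ih =>
    intro x hx r h1 h2
    by_cases hr : m * d < r
    · exact ⟨Homeomorph.refl E, Homeomorph.refl E, 1, 1, x, one_pos, one_pos, by simp, by simp,
        by simp, by simp, hx, rfl, by linarith, by linarith⟩
    · push Not at hr
      obtain ⟨i, y, hy, rfl⟩ := hK x hx
      have hi := hrf0 i
      obtain ⟨F, G, s, s', z, hs, hs', hF, hG, hFQ, hc, hz, hzy, ha, hb⟩ := ih y hy (r / rf i)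
        (by
          rw [div_le_iff₀ hi]
          have := mul_le_mul_of_nonneg_right (hm i) hd.le
          linarith)
        (by
          rw [lt_div_iff₀ hi]
          have : d * ρ ^ k * rf i ≤ d * ρ ^ k * ρ :=
            mul_le_mul_of_nonneg_left (hρ i) (by positivity)
          have h3 : d * ρ ^ (k+1) = d * ρ ^ k * ρ := by ring
          linarith)
      refine ⟨F.trans (f i), G.trans (g i), rf i * s, rg i * s', z, mul_pos hi hs,
        mul_pos (hrg0 i) hs', ?_, ?_, ?_, ?_, hz, ?_, ?_, ?_⟩
      · intro a b; simp [hf, hF, mul_assoc]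
      · intro a b; simp [hg, hG, mul_assoc]
      · intro a ha
        exact subset_closure (hsub i ⟨F a, hFQ a ha, rfl⟩)
      · intro a ha
        simp [hcom i _ (hFQ a ha), hc a ha]
      · simp [hzy]
      · rw [div_le_iff₀ hi] at ha; linarith
      · rw [lt_div_iff₀ hi] at hb; linarith

lemma qp_qc_K {E ι : Type*} [MetricSpace E] [ProperSpace E] (f g : ι → E ≃ₜ E) (Q K : Set E)
    (Φ : E ≃ₜ E) (hQo : IsOpen Q) (hQb : Bornology.IsBounded Q)
    (hKc : IsCompact K) (hKQ : K ⊆ Q)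
    (rf rg : ι → ℝ) (hrf0 : ∀ i, 0 < rf i) (hrg0 : ∀ i, 0 < rg i)
    (hf : ∀ i x y, dist (f i x) (f i y) = rf i * dist x y)
    (hg : ∀ i x y, dist (g i x) (g i y) = rg i * dist x y)
    {ρ m : ℝ} (hρ0 : 0 < ρ) (hρ1 : ρ < 1) (hm0 : 0 < m) (hρ : ∀ i, rf i ≤ ρ) (hm : ∀ i, m ≤ rf i)
    (hm1 : m < 1)
    (hsub : ∀ i, f i '' closure Q ⊆ Q)
    (hK : ∀ x ∈ K, ∃ i, ∃ y ∈ K, f i y = x)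
    (hcom : ∀ i, ∀ x ∈ closure Q, Φ (f i x) = g i (Φ x)) :
    ∃ H : ℝ, ∀ x ∈ K, qcH univ Φ x ≤ ENNReal.ofReal H := by
  obtain ⟨d, hd, hdQ⟩ := hKc.exists_cthickening_subset_open hQo hKQ
  have hball : ∀ z ∈ K, ∀ b, b ∉ Q → d ≤ dist z b := by
    intro z hz b hb
    by_contra h
    push Not at h
    apply hb
    apply hdQ
    refine mem_cthickening_of_dist_le b z d K hz ?_
    rw [dist_comm]; exact h.le
  have hball2 : ∀ z ∈ K, ∀ b, dist z b ≤ d → b ∈ Q := by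
    intro z hz b hb
    apply hdQ
    refine mem_cthickening_of_dist_le b z d K hz ?_
    rw [dist_comm]; exact hb
  obtain ⟨c, hc, hsep⟩ := qp_sep Φ K hKc (mul_pos hm0 hd)
  have hcomp : IsCompact (Φ '' closure Q) := hQb.isCompact_closure.image Φ.continuous
  set D := Metric.diam (Φ '' closure Q) with hD
  refine ⟨D / c, fun x hx => ?_⟩
  unfold qcH
  refine Filter.limsup_le_of_le (by isBoundedDefault) ?_
  have e1 : ∀ᶠ r in 𝓝[>] (0 : ℝ), r < d :=
    (eventually_lt_nhds hd).filter_mono nhdsWithin_le_nhds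
  filter_upwards [e1, self_mem_nhdsWithin] with r hr1 hr0
  have hr0' : (0 : ℝ) < r := hr0
  obtain ⟨k, hk⟩ := exists_pow_lt_of_lt_one (div_pos hr0' hd) hρ1
  obtain ⟨F, G, s, s', z, hs, hs', hF, hG, hFQ, hcFG, hz, rfl, ha, hb⟩ :=
    qp_scale f g Q K Φ rf rg hrf0 hrg0 hf hg hρ0 hm0 hd hρ hm hsub hK hcom k x hx r hr1.le
      (by rw [lt_div_iff₀ hd] at hk; linarith)
  have hzQ : z ∈ closure Q := subset_closure (hKQ hz)
  have u : linDil univ Φ (F z) r ≤ ENNReal.ofReal (s' * D) := by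
    refine iSup₂_le fun w hw => ?_
    obtain ⟨b, rfl⟩ := F.surjective w
    have hw2 : dist (F z) (F b) ≤ r := hw.2
    rw [hF] at hw2
    have hbQ : b ∈ closure Q := subset_closure (hball2 z hz b (by nlinarith))
    rw [edist_dist, hcFG z hzQ, hcFG b hbQ, hG]
    apply ENNReal.ofReal_le_ofReal
    gcongr
    exact dist_le_diam_of_mem hcomp.isBounded ⟨z, hzQ, rfl⟩ ⟨b, hbQ, rfl⟩
  have l : ENNReal.ofReal (s' * c) ≤ linCon univ Φ (F z) r := by
    refine le_iInf₂ fun w hw => ?_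
    obtain ⟨b, rfl⟩ := F.surjective w
    have hw2 : r ≤ dist (F z) (F b) := hw.2
    rw [hF] at hw2
    rw [edist_dist]
    apply ENNReal.ofReal_le_ofReal
    by_cases hbQ : b ∈ closure Q
    · rw [hcFG z hzQ, hcFG b hbQ, hG]
      gcongr
      exact hsep z hz b (by nlinarith)
    · obtain ⟨b', hb'⟩ := G.surjective (Φ (F b))
      obtain ⟨b'', rfl⟩ := Φ.surjective b'
      have hnb : b'' ∉ Q := by
        intro h
        rw [← hcFG b'' (subset_closure h)] at hb'
        have := F.injective (Φ.injective hb')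
        exact hbQ (this ▸ subset_closure h)
      rw [← hb', hcFG z hzQ, hG]
      gcongr
      refine hsep z hz b'' (le_trans ?_ (hball z hz b'' hnb))
      nlinarith
  apply ENNReal.div_le_of_le_mul
  refine u.trans (le_trans (le_of_eq ?_) (mul_le_mul_right l _))
  rw [← ENNReal.ofReal_mul (div_nonneg diam_nonneg hc.le)]
  congr 1
  field_simp
  exact hD


/-- Local conjugation relation near points of the closure of `Q`. -/
lemma qp_local_com {E ι : Type*} [MetricSpace E] [ProperSpace E] [Finite ι]
    (f g : ι → E ≃ₜ E) (Q : Set E) (hQo : IsOpen Q) (hQb : Bornology.IsBounded Q)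
    (hsub : ∀ i, f i '' closure Q ⊆ Q)
    (hdisj : ∀ i j, i ≠ j → Disjoint (f i '' closure Q) (f j '' closure Q))
    (φ : E → E) (Φ : E ≃ₜ E) {ε : ℝ} (hε : 0 < ε)
    (hcompat : ∀ y ∉ Q, Metric.infDist y Q ≤ ε → ∀ i, φ (f i y) = g i (φ y))
    (hΦφ : ∀ x ∈ (⋃ i, f i '' Q)ᶜ, Φ x = φ x)
    (hcom : ∀ i, ∀ x ∈ closure Q, Φ (f i x) = g i (Φ x)) (i : ι) (y : E) (hy : y ∈ closure Q) :
    ∀ᶠ b in 𝓝 y, Φ (f i b) = g i (Φ b) := by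
  have hUQ : (⋃ i, f i '' Q) ⊆ Q :=
    iUnion_subset fun i => (image_mono subset_closure).trans (hsub i)
  have hQne : Q.Nonempty := closure_nonempty_iff.1 ⟨y, hy⟩
  have h1 : ∀ᶠ b in 𝓝 y, infDist b Q < ε := by
    have hc : Tendsto (fun b => infDist b Q) (𝓝 y) (𝓝 (infDist y Q)) :=
      (continuous_infDist_pt Q).tendsto y
    rw [(mem_closure_iff_infDist_zero hQne).1 hy] at hc
    exact hc.eventually (eventually_lt_nhds hε)
  have h2 : ∀ᶠ b in 𝓝 y, ∀ j, j ≠ i → f i b ∉ f j '' closure Q := by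
    rw [eventually_all]
    intro j
    by_cases hj : j = i
    · simp [hj]
    · have hcl : IsClosed (f j '' closure Q) :=
        (hQb.isCompact_closure.image (f j).continuous).isClosed
      have hn : f i y ∉ f j '' closure Q := fun h =>
        (hdisj j i hj).le_bot ⟨h, ⟨y, hy, rfl⟩⟩
      have := ((f i).continuous.tendsto y).eventually (hcl.isOpen_compl.mem_nhds hn)
      filter_upwards [this] with b hb _
      exact hb
  filter_upwards [h1, h2] with b hb1 hb2
  by_cases hbQ : b ∈ Q
  · exact hcom i b (subset_closure hbQ)
  · have hb3 : f i b ∈ (⋃ i, f i '' Q)ᶜ := by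
      intro h
      obtain ⟨j, z, hz, hzb⟩ := mem_iUnion.1 h
      by_cases hj : j = i
      · subst hj
        exact hbQ ((f j).injective hzb ▸ hz)
      · exact hb2 j hj ⟨z, subset_closure hz, hzb⟩
    rw [hΦφ _ hb3, hΦφ b (fun h => hbQ (hUQ h))]
    exact hcompat b hbQ hb1.le i

lemma qp_qc_offK {E ι : Type*} [MetricSpace E] [ProperSpace E] [Finite ι]
    (f g : ι → E ≃ₜ E) (Q : Set E) (hQo : IsOpen Q) (hQb : Bornology.IsBounded Q)
    (hsub : ∀ i, f i '' closure Q ⊆ Q)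
    (hdisj : ∀ i j, i ≠ j → Disjoint (f i '' closure Q) (f j '' closure Q))
    (rf rg : ι → ℝ) (hrf0 : ∀ i, 0 < rf i) (hrg0 : ∀ i, 0 < rg i)
    (hf : ∀ i x y, dist (f i x) (f i y) = rf i * dist x y)
    (hg : ∀ i x y, dist (g i x) (g i y) = rg i * dist x y)
    (φ : E → E) (Φ : E ≃ₜ E) {ε : ℝ} (hε : 0 < ε)
    (hcompat : ∀ y ∉ Q, Metric.infDist y Q ≤ ε → ∀ i, φ (f i y) = g i (φ y))
    (hΦφ : ∀ x ∈ (⋃ i, f i '' Q)ᶜ, Φ x = φ x)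
    (hcom : ∀ i, ∀ x ∈ closure Q, Φ (f i x) = g i (Φ x))
    {H : ℝ} (hH : 1 ≤ H)
    (hq : ∀ x ∈ (⋃ i, f i '' Q)ᶜ, qcH (⋃ i, f i '' Q)ᶜ φ x ≤ ENNReal.ofReal H) (k : ℕ) :
    ∀ x, x ∉ (qpHut (fun i => f i))^[k] (closure Q) → qcH univ Φ x ≤ ENNReal.ofReal H := by
  have hC : qpHut (fun i => f i) (closure Q) ⊆ closure Q :=
    iUnion_subset fun i => (hsub i).trans subset_closure
  have base : ∀ x, x ∉ qpHut (fun i => f i) (closure Q) → qcH univ Φ x ≤ ENNReal.ofReal H := by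
    intro x hx
    have hcl : IsClosed (qpHut (fun i => f i) (closure Q)) :=
      (qp_K_compact f Q hQb 1).isClosed
    obtain ⟨δ, hδ, hsubδ⟩ := Metric.nhds_basis_closedBall.mem_iff.1 (hcl.isOpen_compl.mem_nhds hx)
    have hin : ∀ b, dist x b ≤ δ → b ∈ (⋃ i, f i '' Q)ᶜ := by
      intro b hb h
      refine hsubδ (mem_closedBall'.2 hb) ?_
      exact iUnion_mono (fun i => image_mono subset_closure) h
    have hx0 := hin x (by simpa using hδ.le)
    refine qp_qc_transfer Φ (⋃ i, f i '' Q)ᶜ φ id x x one_pos one_pos hδ rfl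
      Function.surjective_id (by simp) ?_ hH (hq x hx0)
    intro b hb
    refine ⟨hin b hb, ?_⟩
    simp [hΦφ x hx0, hΦφ b (hin b hb)]
  induction k with
  | zero => exact fun x hx => base x (fun h => hx (hC h))
  | succ k ih =>
    intro x hx
    by_cases hxC : x ∈ qpHut (fun i => f i) (closure Q)
    · obtain ⟨i, y, hy, hyx⟩ := mem_iUnion.1 hxC
      have hyk : y ∉ (qpHut (fun i => f i))^[k] (closure Q) := by
        intro h
        apply hx
        rw [Function.iterate_succ_apply']
        exact mem_iUnion.2 ⟨i, y, h, hyx⟩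
      obtain ⟨δ, hδ, hsubδ⟩ := Metric.nhds_basis_closedBall.mem_iff.1
        (qp_local_com f g Q hQo hQb hsub hdisj φ Φ hε hcompat hΦφ hcom i y hy)
      have hloc : ∀ b, dist y b ≤ δ → Φ (f i b) = g i (Φ b) := fun b hb =>
        hsubδ (mem_closedBall'.2 hb)
      refine qp_qc_transfer Φ univ Φ (f i) x y (hrf0 i) (hrg0 i) hδ hyx (f i).surjective (hf i)
        ?_ hH (ih y hyk)
      intro b hb
      refine ⟨mem_univ _, ?_⟩
      rw [hloc b hb, hloc y (by simpa using hδ.le), hg]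
    · exact base x hxC

/-- **Quasiconformal pasting.** Given iterated function systems `𝓘 = {f i}`, `𝓙 = {g i}`
of contracting similarities of `ℝⁿ` satisfying the strong separation condition on bounded
open sets `Q`, `S`, and a quasiconformal homeomorphism
`φ : ℝⁿ \ ⋃ᵢ fᵢ(Q) → ℝⁿ \ ⋃ᵢ gᵢ(S)` satisfying the compatibility condition, there exists a
quasiconformal homeomorphism `Φ : ℝⁿ → ℝⁿ` agreeing with `φ` off `⋃ᵢ fᵢ(Q)`, with
`Φ ∘ fᵢ = gᵢ ∘ Φ` on the closure of `Q`, and mapping `K_𝓘` onto `K_𝓙`. -/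
theorem qc_pasting
    (n N : ℕ) (hn : 2 ≤ n) (hN : 0 < N)
    (f g : Fin N → EuclideanSpace ℝ (Fin n) → EuclideanSpace ℝ (Fin n))
    (rf rg : Fin N → ℝ)
    (hf : ∀ i, IsSimilarityWith (rf i) (f i)) (hrf : ∀ i, rf i < 1)
    (hg : ∀ i, IsSimilarityWith (rg i) (g i)) (hrg : ∀ i, rg i < 1)
    (Q S : Set (EuclideanSpace ℝ (Fin n)))
    (hQo : IsOpen Q) (hQb : Bornology.IsBounded Q)
    (hSo : IsOpen S) (hSb : Bornology.IsBounded S)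
    (hsepQ : StrongSeparation f Q) (hsepS : StrongSeparation g S)
    (φ : EuclideanSpace ℝ (Fin n) → EuclideanSpace ℝ (Fin n))
    (hφ_homeo : IsHomeoOn φ (⋃ i, f i '' Q)ᶜ (⋃ i, g i '' S)ᶜ)
    (hφ_qc : QuasiconformalOn (⋃ i, f i '' Q)ᶜ φ)
    (hφ_compat : ∃ ε > 0, ∀ y ∉ Q, Metric.infDist y Q ≤ ε →
      ∀ i, φ (f i y) = g i (φ y)) :
    ∃ Φ : EuclideanSpace ℝ (Fin n) ≃ₜ EuclideanSpace ℝ (Fin n),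
      QuasiconformalOn Set.univ ⇑Φ ∧
      (∀ x ∈ (⋃ i, f i '' Q)ᶜ, Φ x = φ x) ∧
      (∀ i, ∀ x ∈ closure Q, Φ (f i x) = g i (Φ x)) ∧
      ⇑Φ '' invariantSet f Q = invariantSet g S := by
  haveI : Nontrivial (EuclideanSpace ℝ (Fin n)) := by
    haveI : Nonempty (Fin n) := ⟨⟨0, by omega⟩⟩
    infer_instance
  haveI : Nonempty (Fin N) := ⟨⟨0, hN⟩⟩
  choose F hF using fun i => qp_sim_homeo (hf i).1 (hf i).2
  choose G hG using fun i => qp_sim_homeo (hg i).1 (hg i).2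
  obtain rfl : (fun i => ⇑(F i)) = f := funext hF
  obtain rfl : (fun i => ⇑(G i)) = g := funext hG
  clear hF hG
  obtain ⟨hsub, hdisj⟩ := hsepQ
  obtain ⟨hsubS, -⟩ := hsepS
  obtain ⟨ε, hε, hcompat⟩ := hφ_compat
  obtain ⟨H, hH, hq⟩ := hφ_qc
  obtain ⟨i1, hi1⟩ := Finite.exists_max rf
  obtain ⟨i2, hi2⟩ := Finite.exists_max rg
  obtain ⟨i3, hi3⟩ := Finite.exists_min rf
  have hρ0 : 0 < max (rf i1) (rg i2) := lt_max_of_lt_left (hf i1).1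
  have hρ1 : max (rf i1) (rg i2) < 1 := max_lt (hrf i1) (hrg i2)
  obtain ⟨S', Φ, hS'o, hS'b, hV, hS'sub, hS'disj, hΦφ, hcom, hΦQ⟩ := qp_homeo F G Q S hQo hQb hSo hSb
    hsub hdisj hsubS hρ0.le hρ1
    (fun i x y => by
      rw [(hf i).2]
      gcongr
      exact (hi1 i).trans (le_max_left _ _))
    (fun i x y => by
      rw [(hg i).2]
      gcongr
      exact (hi2 i).trans (le_max_right _ _))
    φ hφ_homeo hε hcompat
  refine ⟨Φ, ?_, hΦφ, hcom, qp_inv_image F G Q S S' Φ hsub hsubS hS'sub hV hcom hΦQ⟩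
  obtain ⟨H', hH'⟩ := qp_qc_K F G Q (⋂ k : ℕ, (qpHut (fun i => F i))^[k] (closure Q)) Φ hQo hQb
    ((qp_K_compact F Q hQb 0).of_isClosed_subset
      (isClosed_iInter fun k => (qp_K_compact F Q hQb k).isClosed) (iInter_subset _ 0))
    ((iInter_subset _ 1).trans (iUnion_subset hsub))
    rf rg (fun i => (hf i).1) (fun i => (hg i).1) (fun i => (hf i).2) (fun i => (hg i).2)
    (hf i1).1 (hrf i1) (hf i3).1 hi1 hi3 (hrf i3) hsub (qp_K_self F Q hsub hdisj) hcom
  refine ⟨max H H', le_max_of_le_left hH, fun x _ => ?_⟩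
  by_cases hx : x ∈ ⋂ k : ℕ, (qpHut (fun i => F i))^[k] (closure Q)
  · exact (hH' x hx).trans (ENNReal.ofReal_le_ofReal (le_max_right _ _))
  · rw [mem_iInter, not_forall] at hx
    obtain ⟨k, hk⟩ := hx
    exact (qp_qc_offK F G Q hQo hQb hsub hdisj rf rg (fun i => (hf i).1) (fun i => (hg i).1)
      (fun i => (hf i).2) (fun i => (hg i).2) φ Φ hε hcompat hΦφ hcom hH hq k x hk).trans
      (ENNReal.ofReal_le_ofReal (le_max_left _ _))
end

section
/- Let n ≥ 2 and p > n. Let {f₁,…,f_N} be contracting similarities of ℝⁿ, each of ratio d ∈ (0,1), satisfying the strong separation condition on a bounded open set Q, and let {g₁,…,g_N} be similarities of ℝⁿ, each of ratio t ∈ (0,1). Let Φ : ℝⁿ → ℝⁿ be a homeomorphism that is differentiable almost everywhere and satisfies Φ(fᵢ(x)) = gᵢ(Φ(x)) for every i and every x in the closure of Q. Suppose that C := ∫_{closure(Q) \ ⋃ᵢ fᵢ(Q)} ‖DΦ(x)‖^p dx < ∞ and that N t^p d^{n−p} < 1. Then ∫_{closure(Q)} ‖DΦ(x)‖^p dx ≤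 C · Σ_{l=0}^{∞} (N t^p d^{n−p})^l = C/(1 − N t^p d^{n−p}) < ∞. -/
open Set Metric Filter MeasureTheory
open scoped ENNReal Topology NNReal

abbrev EuSp (n : ℕ) := EuclideanSpace ℝ (Fin n)

lemma simil_form {n : ℕ} {r : ℝ} {f : EuSp n → EuSp n} (hf : IsSimilarityWith r f) :
    ∃ (L : EuSp n ≃ₗᵢ[ℝ] EuSp n) (c : EuSp n), ∀ x, f x = r • L x + c := by
  obtain ⟨hr, hd⟩ := hf
  have hi : Isometry (fun x => r⁻¹ • f x) := by
    refine Isometry.of_dist_eq fun x y => ?_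
    rw [dist_smul₀, hd, Real.norm_eq_abs, abs_of_pos (inv_pos.2 hr)]
    field_simp
  let A := hi.affineIsometryOfStrictConvexSpace
  refine ⟨A.linearIsometry.toLinearIsometryEquiv rfl, f 0, fun x => ?_⟩
  have h1 : A x = A.linearIsometry (x - 0) + A 0 := by
    have := A.map_vadd 0 x
    simpa using this
  have h2 : A x = r⁻¹ • f x := rfl
  have h3 : A 0 = r⁻¹ • f 0 := rfl
  rw [h2, h3, sub_zero] at h1
  have h4 := congrArg (fun z => r • z) h1
  simp only [smul_add, smul_inv_smul₀ hr.ne'] at h4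
  simpa using h4

lemma abs_det_simil {n : ℕ} {r : ℝ} (hr : 0 < r) (L : EuSp n ≃ₗᵢ[ℝ] EuSp n) :
    |(r • (L.toContinuousLinearEquiv : EuSp n →L[ℝ] EuSp n)).det| = r ^ n := by
  have h1 : |LinearMap.det (L.toLinearIsometry.toLinearMap)| = 1 := by
    rw [← LinearMap.normDet_eq_abs_det, LinearIsometry.normDet_eq_one]
  have h2 : (r • (L.toContinuousLinearEquiv : EuSp n →L[ℝ] EuSp n)).det
      = LinearMap.det (r • L.toLinearIsometry.toLinearMap) := rfl
  rw [h2, LinearMap.det_smul, abs_mul, h1, mul_one, abs_of_pos (by positivity)]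
  simp

lemma simil_hasFDerivAt {n : ℕ} {r : ℝ} {f : EuSp n → EuSp n} {L : EuSp n ≃ₗᵢ[ℝ] EuSp n}
    {c : EuSp n} (h : ∀ x, f x = r • L x + c) (x : EuSp n) :
    HasFDerivAt f (r • (L.toContinuousLinearEquiv : EuSp n →L[ℝ] EuSp n)) x := by
  have : f = fun x => r • L x + c := funext h
  rw [this]
  exact ((L.toContinuousLinearEquiv.hasFDerivAt (x := x)).const_smul r).add_const c

lemma simil_inj {n : ℕ} {r : ℝ} {f : EuSp n → EuSp n} (hf : IsSimilarityWith r f) :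
    Function.Injective f := by
  intro x y hxy
  have := hf.2 x y
  rw [hxy, dist_self] at this
  rcases mul_eq_zero.1 this.symm with h | h
  · exact absurd h hf.1.ne'
  · exact dist_eq_zero.1 h

lemma simil_cont {n : ℕ} {r : ℝ} {f : EuSp n → EuSp n} (hf : IsSimilarityWith r f) :
    Continuous f := by
  obtain ⟨L, c, h⟩ := simil_form hf
  rw [continuous_iff_continuousAt]
  exact fun x => (simil_hasFDerivAt h x).continuousAt

lemma simil_lintegral {n : ℕ} {r : ℝ} {f : EuSp n → EuSp n} (hf : IsSimilarityWith r f)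
    {S : Set (EuSp n)} (hS : MeasurableSet S) (G : EuSp n → ℝ≥0∞) :
    ∫⁻ x in f '' S, G x = ∫⁻ x in S, ENNReal.ofReal (r ^ n) * G (f x) := by
  obtain ⟨L, c, h⟩ := simil_form hf
  rw [lintegral_image_eq_lintegral_abs_det_fderiv_mul volume hS
    (fun x _ => (simil_hasFDerivAt h x).hasFDerivWithinAt) (simil_inj hf).injOn]
  simp_rw [abs_det_simil hf.1 L]

lemma simil_volume {n : ℕ} {r : ℝ} {f : EuSp n → EuSp n} (hf : IsSimilarityWith r f)
    {S : Set (EuSp n)} (hS : MeasurableSet S) :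
    volume (f '' S) = ENNReal.ofReal (r ^ n) * volume S := by
  have := simil_lintegral hf hS (fun _ => 1)
  simpa using this

lemma fderiv_simil_le {n : ℕ} {d t : ℝ} {f g Φ : EuSp n → EuSp n} (hf : IsSimilarityWith d f)
    (hg : IsSimilarityWith t g) {Q : Set (EuSp n)} (hQ : IsOpen Q)
    (hc : ∀ x ∈ Q, Φ (f x) = g (Φ x)) {x : EuSp n} (hx : x ∈ Q)
    (hdiff : DifferentiableAt ℝ Φ x) :
    ‖fderiv ℝ Φ (f x)‖ ≤ t * d⁻¹ * ‖fderiv ℝ Φ x‖ := by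
  obtain ⟨L, c, h⟩ := simil_form hf
  obtain ⟨M, c', h'⟩ := simil_form hg
  have hd := hf.1
  have ht := hg.1
  let fi : EuSp n → EuSp n := fun y => d⁻¹ • L.symm y + (- (d⁻¹ • L.symm c))
  have hfi : ∀ y, f (fi y) = y := by
    intro y
    rw [h]
    simp [fi, smul_inv_smul₀ hd.ne']
  have hfi' : fi (f x) = x := simil_inj hf (hfi _)
  have hD := simil_hasFDerivAt (f := fi) (fun y => rfl) (f x)
  have hD1 : HasFDerivAt Φ (fderiv ℝ Φ x) (fi (f x)) := by rw [hfi']; exact hdiff.hasFDerivAt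
  have hD2 := ((simil_hasFDerivAt h' (Φ (fi (f x)))).comp (fi (f x)) hD1).comp (f x) hD
  have hev : Φ =ᶠ[𝓝 (f x)] (g ∘ Φ) ∘ fi := by
    have : ∀ᶠ y in 𝓝 (f x), fi y ∈ Q :=
      hD.continuousAt.eventually_mem (by rw [hfi']; exact hQ.mem_nhds hx)
    filter_upwards [this] with y hy
    simp only [Function.comp]
    rw [← hc _ hy, hfi]
  have hD3 := (hD2.congr_of_eventuallyEq hev).fderiv
  rw [hD3]
  refine ContinuousLinearMap.opNorm_le_bound _ (by positivity) fun v => ?_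
  simp only [ContinuousLinearMap.comp_apply, ContinuousLinearMap.smul_apply,
    ContinuousLinearEquiv.coe_coe, LinearIsometryEquiv.coe_toContinuousLinearEquiv, norm_smul,
    LinearIsometryEquiv.norm_map, map_smul, Real.norm_eq_abs, abs_of_pos hd, abs_of_pos ht,
    abs_of_pos (inv_pos.2 hd)]
  have := (fderiv ℝ Φ x).le_opNorm (L.symm v)
  rw [LinearIsometryEquiv.norm_map] at this
  calc d⁻¹ * (t * ‖(fderiv ℝ Φ x) (L.symm v)‖) ≤ d⁻¹ * (t * (‖fderiv ℝ Φ x‖ * ‖v‖)) := by gcongr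
    _ = _ := by ring

lemma integral_image_le {n : ℕ} {d t p : ℝ} {f g Φ : EuSp n → EuSp n} (hp : 0 ≤ p)
    (hf : IsSimilarityWith d f)
    (hg : IsSimilarityWith t g) {Q : Set (EuSp n)} (hQ : IsOpen Q)
    (hc : ∀ x ∈ Q, Φ (f x) = g (Φ x)) (hdiff : ∀ᵐ x, DifferentiableAt ℝ Φ x)
    {S : Set (EuSp n)} (hS : MeasurableSet S) (hSQ : S ⊆ Q) :
    ∫⁻ x in f '' S, ENNReal.ofReal (‖fderiv ℝ Φ x‖ ^ p) ≤
      ENNReal.ofReal (t ^ p * d ^ ((n : ℝ) - p)) *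
        ∫⁻ x in S, ENNReal.ofReal (‖fderiv ℝ Φ x‖ ^ p) := by
  have hd := hf.1
  have ht := hg.1
  rw [simil_lintegral hf hS, ← lintegral_const_mul' _ _ ENNReal.ofReal_ne_top]
  refine setLIntegral_mono_ae' hS ?_
  filter_upwards [hdiff] with x hx hxS
  rw [← ENNReal.ofReal_mul (by positivity), ← ENNReal.ofReal_mul (by positivity)]
  apply ENNReal.ofReal_le_ofReal
  calc d ^ n * ‖fderiv ℝ Φ (f x)‖ ^ p
      ≤ d ^ n * (t * d⁻¹ * ‖fderiv ℝ Φ x‖) ^ p := by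
        gcongr
        exact fderiv_simil_le hf hg hQ hc (hSQ hxS) hx
    _ = _ := by
        rw [Real.mul_rpow (by positivity) (by positivity), Real.mul_rpow (by positivity)
          (by positivity), Real.inv_rpow hd.le, Real.rpow_sub hd, Real.rpow_natCast]
        ring

/-- The Hutchinson operator. -/
def hutch {n N : ℕ} (f : Fin N → EuSp n → EuSp n) (S : Set (EuSp n)) : Set (EuSp n) :=
  ⋃ i, f i '' S

lemma hutch_meas {n N : ℕ} {d : ℝ} {f : Fin N → EuSp n → EuSp n}
    (hf : ∀ i, IsSimilarityWith d (f i)) {S : Set (EuSp n)} (hS : MeasurableSet S) :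
    MeasurableSet (hutch f S) :=
  MeasurableSet.iUnion fun i =>
    hS.image_of_continuousOn_injOn (simil_cont (hf i)).continuousOn (simil_inj (hf i)).injOn

lemma hutch_union {n N : ℕ} (f : Fin N → EuSp n → EuSp n) (S T : Set (EuSp n)) :
    hutch f (S ∪ T) = hutch f S ∪ hutch f T := by
  simp [hutch, image_union, iUnion_union_distrib]

lemma hutch_mono {n N : ℕ} (f : Fin N → EuSp n → EuSp n) {S T : Set (EuSp n)} (h : S ⊆ T) :
    hutch f S ⊆ hutch f T := iUnion_mono fun _ => image_mono h

lemma hutch_volume_le {n N : ℕ} {d : ℝ} {f : Fin N → EuSp n → EuSp n}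
    (hf : ∀ i, IsSimilarityWith d (f i)) {S : Set (EuSp n)} (hS : MeasurableSet S) :
    volume (hutch f S) ≤ (N * ENNReal.ofReal (d ^ n)) * volume S := by
  refine (measure_iUnion_le _).trans ?_
  simp_rw [simil_volume (hf _) hS]
  simp [tsum_fintype, mul_assoc]

/-- Strong separation forces `N dⁿ < 1`. -/
lemma ratio_lt_one {n N : ℕ} (hn : 2 ≤ n) {d : ℝ} {f : Fin N → EuSp n → EuSp n}
    (hf : ∀ i, IsSimilarityWith d (f i)) {Q : Set (EuSp n)} (hQo : IsOpen Q)
    (hQb : Bornology.IsBounded Q) (hne : Q.Nonempty) (hsep : StrongSeparation f Q) :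
    (N : ℝ≥0∞) * ENNReal.ofReal (d ^ n) < 1 := by
  have : Nontrivial (EuSp n) := by
    have : Nonempty (Fin n) := ⟨⟨0, by omega⟩⟩
    infer_instance
  have hcpt : IsCompact (closure Q) := hQb.isCompact_closure
  have hTc : IsCompact (hutch f (closure Q)) :=
    isCompact_iUnion fun i => hcpt.image (simil_cont (hf i))
  have hsub : hutch f (closure Q) ⊆ Q := iUnion_subset hsep.1
  have hvT : volume (hutch f (closure Q)) =
      (N * ENNReal.ofReal (d ^ n)) * volume (closure Q) := by
    unfold hutch
    rw [measure_iUnion (fun i j hij => hsep.2 i j hij)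
      (fun i => (hcpt.image (simil_cont (hf i))).measurableSet)]
    simp_rw [simil_volume (hf _) hcpt.measurableSet]
    simp [tsum_fintype, mul_assoc]
  have hfin : volume Q < ⊤ := hQb.measure_lt_top
  have hpos : 0 < volume Q := hQo.measure_pos _ hne
  have hdne : (Q \ hutch f (closure Q)).Nonempty := by
    by_contra h
    rw [not_nonempty_iff_eq_empty, diff_eq_empty] at h
    have heq : Q = hutch f (closure Q) := h.antisymm hsub
    have hclopen : IsClopen Q := ⟨by rw [heq]; exact hTc.isClosed, hQo⟩
    rcases isClopen_iff.1 hclopen with h | h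
    · exact hne.ne_empty h
    · rw [h] at hQb
      exact NormedSpace.unbounded_univ ℝ (EuSp n) hQb
  have hdpos : 0 < volume (Q \ hutch f (closure Q)) :=
    (hQo.sdiff hTc.isClosed).measure_pos _ hdne
  have hlt : volume (hutch f (closure Q)) < volume Q := by
    have h1 := measure_diff hsub hTc.measurableSet.nullMeasurableSet
      (hTc.measure_lt_top (μ := volume)).ne
    rw [h1] at hdpos
    exact tsub_pos_iff_lt.1 hdpos
  by_contra hge
  rw [not_lt] at hge
  have : volume Q ≤ volume (hutch f (closure Q)) := by
    rw [hvT]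
    calc volume Q ≤ 1 * volume (closure Q) := by rw [one_mul]; exact measure_mono subset_closure
      _ ≤ _ := by gcongr
  exact absurd hlt this.not_gt

/-- **Sobolev integrability of the generated map.** Let `n ≥ 2`, `p > n`, let `{f i}` be
contracting similarities of ratio `d` with the strong separation condition on a bounded
open set `Q`, let `{g i}` be similarities of ratio `t`, and let `Φ : ℝⁿ → ℝⁿ` be an almost
everywhere differentiable homeomorphism with `Φ ∘ fᵢ = gᵢ ∘ Φ` on `closure Q`. If
`C = ∫_{closure Q \ ⋃ᵢ fᵢ(Q)} ‖DΦ‖ᵖ < ∞` and `N tᵖ d^{n-p} < 1`, then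
`∫_{closure Q} ‖DΦ‖ᵖ ≤ C ∑ₗ (N tᵖ d^{n-p})ˡ = C / (1 - N tᵖ d^{n-p}) < ∞`. -/
theorem generated_map_sobolev_integrability
    (n : ℕ) (hn : 2 ≤ n) (p : ℝ) (hp : (n : ℝ) < p) (N : ℕ)
    (f g : Fin N → EuclideanSpace ℝ (Fin n) → EuclideanSpace ℝ (Fin n))
    (d t : ℝ) (hd₀ : 0 < d) (hd₁ : d < 1) (ht₀ : 0 < t) (ht₁ : t < 1)
    (hf : ∀ i, IsSimilarityWith d (f i)) (hg : ∀ i, IsSimilarityWith t (g i))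
    (Q : Set (EuclideanSpace ℝ (Fin n)))
    (hQo : IsOpen Q) (hQb : Bornology.IsBounded Q)
    (hsep : StrongSeparation f Q)
    (Φ : EuclideanSpace ℝ (Fin n) → EuclideanSpace ℝ (Fin n))
    (hΦ : IsHomeomorph Φ)
    (hΦ_diff : ∀ᵐ x, DifferentiableAt ℝ Φ x)
    (hΦ_comm : ∀ i, ∀ x ∈ closure Q, Φ (f i x) = g i (Φ x))
    (C : ℝ≥0∞)
    (hC : C = ∫⁻ x in closure Q \ ⋃ i, f i '' Q, ENNReal.ofReal (‖fderiv ℝ Φ x‖ ^ p))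
    (hC_fin : C < ⊤)
    (hq : (N : ℝ) * t ^ p * d ^ ((n : ℝ) - p) < 1) :
    (∫⁻ x in closure Q, ENNReal.ofReal (‖fderiv ℝ Φ x‖ ^ p)) ≤
        C * ∑' l : ℕ, (ENNReal.ofReal ((N : ℝ) * t ^ p * d ^ ((n : ℝ) - p))) ^ l ∧
    C * ∑' l : ℕ, (ENNReal.ofReal ((N : ℝ) * t ^ p * d ^ ((n : ℝ) - p))) ^ l =
        C / ENNReal.ofReal (1 - (N : ℝ) * t ^ p * d ^ ((n : ℝ) - p)) ∧
    (∫⁻ x in closure Q, ENNReal.ofReal (‖fderiv ℝ Φ x‖ ^ p)) < ⊤ := by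
  set q : ℝ≥0∞ := ENNReal.ofReal ((N : ℝ) * t ^ p * d ^ ((n : ℝ) - p)) with hqdef
  have hq0 : 0 ≤ (N : ℝ) * t ^ p * d ^ ((n : ℝ) - p) := by positivity
  have hp0 : 0 ≤ p := le_trans (Nat.cast_nonneg n) hp.le
  have hqN : q = N * ENNReal.ofReal (t ^ p * d ^ ((n : ℝ) - p)) := by
    rw [hqdef, mul_assoc, ENNReal.ofReal_mul (Nat.cast_nonneg N), ENNReal.ofReal_natCast]
  set F : EuSp n → ℝ≥0∞ := fun x => ENNReal.ofReal (‖fderiv ℝ Φ x‖ ^ p) with hF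
  -- scaling under the Hutchinson operator
  have hscale : ∀ S : Set (EuSp n), MeasurableSet S → S ⊆ Q →
      ∫⁻ x in hutch f S, F x ≤ q * ∫⁻ x in S, F x := by
    intro S hS hSQ
    refine (lintegral_iUnion_le _ _).trans ?_
    rw [tsum_fintype]
    refine (Finset.sum_le_sum fun i _ => integral_image_le hp0 (hf i) (hg i) hQo
      (fun x hx => hΦ_comm i x (subset_closure hx)) hΦ_diff hS hSQ).trans ?_
    simp [hqN, mul_assoc, hF]
  have hQm := hQo.measurableSet
  have hTQ : hutch f Q ⊆ Q :=
    (hutch_mono f subset_closure).trans (iUnion_subset hsep.1)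
  set A : Set (EuSp n) := Q \ hutch f Q with hA
  have hAm : MeasurableSet A := hQm.diff (hutch_meas hf hQm)
  have hitm : ∀ S : Set (EuSp n), MeasurableSet S → ∀ k : ℕ, MeasurableSet ((hutch f)^[k] S) := by
    intro S hS k
    induction k with
    | zero => exact hS
    | succ k ih => rw [Function.iterate_succ_apply']; exact hutch_meas hf ih
  have hits : ∀ S : Set (EuSp n), S ⊆ Q → ∀ k : ℕ, (hutch f)^[k] S ⊆ Q := by
    intro S hS k
    induction k with
    | zero => exact hS
    | succ k ih => rw [Function.iterate_succ_apply']; exact (hutch_mono f ih).trans hTQ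
  have hAC : ∫⁻ x in A, F x ≤ C := by
    rw [hC]
    exact lintegral_mono_set (sdiff_subset_sdiff_left subset_closure)
  have hAk : ∀ k : ℕ, ∫⁻ x in (hutch f)^[k] A, F x ≤ C * q ^ k := by
    intro k
    induction k with
    | zero => simpa using hAC
    | succ k ih =>
      rw [Function.iterate_succ_apply']
      refine (hscale _ (hitm A hAm k) (hits A sdiff_subset k)).trans ?_
      calc q * ∫⁻ x in (hutch f)^[k] A, F x ≤ q * (C * q ^ k) := by gcongr
        _ = _ := by ring
  -- the residual set is null
  set K : Set (EuSp n) := ⋂ k : ℕ, (hutch f)^[k] Q with hK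
  have hK0 : volume K = 0 := by
    rcases Q.eq_empty_or_nonempty with he | hne
    · refine measure_mono_null (iInter_subset _ 0) ?_
      simp [he]
    have hr := ratio_lt_one hn hf hQo hQb hne hsep
    set ρ : ℝ≥0∞ := (N : ℝ≥0∞) * ENNReal.ofReal (d ^ n)
    have hb : ∀ k : ℕ, volume ((hutch f)^[k] Q) ≤ ρ ^ k * volume Q := by
      intro k
      induction k with
      | zero => simp
      | succ k ih =>
        rw [Function.iterate_succ_apply']
        refine (hutch_volume_le hf (hitm Q hQm k)).trans ?_
        calc ρ * volume ((hutch f)^[k] Q) ≤ ρ * (ρ ^ k * volume Q) := by gcongr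
          _ = _ := by ring
    have hlim : Tendsto (fun k : ℕ => ρ ^ k * volume Q) atTop (𝓝 (0 * volume Q)) :=
      ENNReal.Tendsto.mul_const (ENNReal.tendsto_pow_atTop_nhds_zero_of_lt_one hr)
        (Or.inr hQb.measure_lt_top.ne)
    rw [zero_mul] at hlim
    exact le_antisymm (ge_of_tendsto' hlim
      fun k => (measure_mono (iInter_subset _ k)).trans (hb k)) zero_le
  have hcover : Q ⊆ (⋃ k : ℕ, (hutch f)^[k] A) ∪ K := by
    intro x hx
    by_contra hcon
    rw [mem_union, not_or] at hcon
    apply hcon.2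
    refine mem_iInter.2 fun k => ?_
    induction k with
    | zero => exact hx
    | succ k ih =>
      have h1 : ∀ k : ℕ, ∀ S T : Set (EuSp n),
          (hutch f)^[k] (S ∪ T) = (hutch f)^[k] S ∪ (hutch f)^[k] T := by
        intro k S T
        induction k with
        | zero => rfl
        | succ k ih => simp only [Function.iterate_succ_apply', ih, hutch_union]
      have h2 : Q = A ∪ hutch f Q := (sdiff_union_of_subset hTQ).symm
      rw [h2, h1] at ih
      rcases ih with h | h
      · exact absurd (mem_iUnion.2 ⟨k, h⟩) hcon.1
      · rwa [Function.iterate_succ_apply]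
  have hQint : ∫⁻ x in Q, F x ≤ C * ∑' l : ℕ, q ^ l := by
    calc ∫⁻ x in Q, F x ≤ ∫⁻ x in (⋃ k : ℕ, (hutch f)^[k] A) ∪ K, F x :=
          lintegral_mono_set hcover
      _ ≤ (∫⁻ x in ⋃ k : ℕ, (hutch f)^[k] A, F x) + ∫⁻ x in K, F x := lintegral_union_le _ _ _
      _ = ∫⁻ x in ⋃ k : ℕ, (hutch f)^[k] A, F x := by
          rw [setLIntegral_measure_zero _ _ hK0, add_zero]
      _ ≤ ∑' k : ℕ, ∫⁻ x in (hutch f)^[k] A, F x := lintegral_iUnion_le _ _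
      _ ≤ ∑' k : ℕ, C * q ^ k := ENNReal.tsum_le_tsum hAk
      _ = _ := ENNReal.tsum_mul_left
  have hmain : ∫⁻ x in closure Q, F x ≤ C * ∑' l : ℕ, q ^ l := by
    calc ∫⁻ x in closure Q, F x
        ≤ ∫⁻ x in (closure Q \ ⋃ i, f i '' Q) ∪ hutch f Q, F x := by
          refine lintegral_mono_set ?_
          rw [hutch, sdiff_union_self]
          exact subset_union_left
      _ ≤ C + ∫⁻ x in hutch f Q, F x := by
          rw [hC]; exact lintegral_union_le _ _ _
      _ ≤ C + q * (C * ∑' l : ℕ, q ^ l) := by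
          gcongr
          exact (hscale Q hQm subset_rfl).trans (by gcongr)
      _ = C * ∑' l : ℕ, q ^ l := by
          conv_rhs => rw [tsum_eq_zero_add' ENNReal.summable]
          simp_rw [pow_succ', ENNReal.tsum_mul_left]
          ring
  have hsum : C * ∑' l : ℕ, q ^ l =
      C / ENNReal.ofReal (1 - (N : ℝ) * t ^ p * d ^ ((n : ℝ) - p)) := by
    rw [ENNReal.tsum_geometric, ENNReal.ofReal_sub _ hq0, ENNReal.ofReal_one, div_eq_mul_inv]
  refine ⟨hmain, hsum, hmain.trans_lt ?_⟩
  rw [hsum]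
  refine ENNReal.div_lt_top hC_fin.ne ?_
  rw [Ne, ENNReal.ofReal_eq_zero, not_le]
  linarith
end
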